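/- Let A = ℚ[x]/(x^{n+1}) be a truncated polynomial algebra. Then the cyclic homology HC_k(A) over ℚ vanishes for infinitely many degrees of one parity; in particular, the reduced cyclic homology of A relative to ℚ is concentrated in even degrees. -/

import Mathlib

noncomputable section

/- STATEMENT 12: For the truncated polynomial algebra A = ℚ[x]/(x^{n+1}), the
cyclic homology HC_k(A) over ℚ vanishes for infinitely many degrees of one
parity; in particular, the reduced cyclic homology of A relative to ℚ is
concentrated in even degrees.

Since A = ℚ ⊕ Ā as algebras, where Ā = span(x, …, xⁿ) is the (nonunital)
augmentation ideal, the reduced cyclic homology of A relative to ℚ is the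
cyclic homology of the nonunital algebra Ā, computed by the Tsygan bicomplex
built from b, b', the cyclic operator t and the norm N.  We realize
Ā^{⊗(q+1)} concretely on the monomial basis: a basis element of `Ch n q` is a
tuple a : Fin (q+1) → Fin n of exponent indices, encoding
x^{a₀+1} ⊗ ⋯ ⊗ x^{a_q+1} (all exponents between 1 and n), and products
truncate: x^i · x^j = 0 once i + j > n. -/

/-- Chains: Ā^{⊗(q+1)} on the monomial basis, Ā = span(x¹,…,xⁿ) ⊂ ℚ[x]/(x^{n+1}). -/
def Ch (n q : ℕ) : Type := ((Fin (q + 1) → Fin n) →₀ ℚ)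

instance (n q : ℕ) : AddCommGroup (Ch n q) :=
  inferInstanceAs (AddCommGroup ((Fin (q + 1) → Fin n) →₀ ℚ))
instance (n q : ℕ) : Module ℚ (Ch n q) :=
  inferInstanceAs (Module ℚ ((Fin (q + 1) → Fin n) →₀ ℚ))

/-- Transport along an equality of degrees. -/
def ccast {n : ℕ} {q q' : ℕ} (h : q = q') : Ch n q ≃ₗ[ℚ] Ch n q' :=
  h ▸ LinearEquiv.refl ℚ (Ch n q)

/-- The basis vector obtained by multiplying the i-th and (i+1)-st tensor
factors of a (zero if the product truncates to zero). -/
def merge {n q : ℕ} (a : Fin (q + 2) → Fin n) (i : Fin (q + 1)) : Ch n q :=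
  if h : (a i.castSucc : ℕ) + (a i.succ : ℕ) + 1 < n then
    Finsupp.single
      (fun j : Fin (q + 1) =>
        if (j : ℕ) < (i : ℕ) then a j.castSucc
        else if (j : ℕ) = (i : ℕ) then ⟨(a i.castSucc : ℕ) + (a i.succ : ℕ) + 1, h⟩
        else a j.succ)
      (1 : ℚ)
  else 0

/-- As `merge`, multiplying the last factor into the first (for the cyclic
term of the Hochschild boundary b). -/
def mergeLast {n q : ℕ} (a : Fin (q + 2) → Fin n) : Ch n q :=
  if h : (a (Fin.last (q + 1)) : ℕ) + (a 0 : ℕ) + 1 < n then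
    Finsupp.single
      (fun j : Fin (q + 1) =>
        if (j : ℕ) = 0 then ⟨(a (Fin.last (q + 1)) : ℕ) + (a 0 : ℕ) + 1, h⟩
        else a j.castSucc)
      (1 : ℚ)
  else 0

/-- The bar boundary b'. -/
def bbar (n q : ℕ) : Ch n (q + 1) →ₗ[ℚ] Ch n q :=
  Finsupp.linearCombination ℚ fun a : Fin (q + 2) → Fin n =>
    ∑ i : Fin (q + 1), ((-1 : ℚ) ^ (i : ℕ)) • merge a i

/-- The Hochschild boundary b. -/
def bH (n q : ℕ) : Ch n (q + 1) →ₗ[ℚ] Ch n q :=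
  Finsupp.linearCombination ℚ fun a : Fin (q + 2) → Fin n =>
    (∑ i : Fin (q + 1), ((-1 : ℚ) ^ (i : ℕ)) • merge a i)
      + ((-1 : ℚ) ^ (q + 1)) • mergeLast a

/-- The cyclic operator t. -/
def tOp (n q : ℕ) : Ch n q →ₗ[ℚ] Ch n q :=
  Finsupp.linearCombination ℚ fun a : Fin (q + 1) → Fin n =>
    ((-1 : ℚ) ^ q) • Finsupp.single (fun j : Fin (q + 1) => a (j - 1)) (1 : ℚ)

/-- The norm operator N = 1 + t + ⋯ + t^q. -/
def nOp (n q : ℕ) : Ch n q →ₗ[ℚ] Ch n q :=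
  ∑ i ∈ Finset.range (q + 1), (tOp n q) ^ i

/-- Total complex of the (first-quadrant) Tsygan bicomplex, X_{p,q} = Ā^{⊗(q+1)},
in total degree m. -/
def TotT (n m : ℕ) : Type := ∀ p : Fin (m + 1), Ch n (m - p)

instance (n m : ℕ) : AddCommGroup (TotT n m) := Pi.addCommGroup
instance (n m : ℕ) : Module ℚ (TotT n m) := Pi.module _ _ _

/-- The total differential TotT n (m+1) → TotT n m of the Tsygan bicomplex:
columns carry b (p even) resp. -b' (p odd); rows carry 1 - t (out of odd
columns) and N (out of even columns). -/
def DT (n m : ℕ) : TotT n (m + 1) →ₗ[ℚ] TotT n m :=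
  LinearMap.pi fun p : Fin (m + 1) =>
    ((if Even (p : ℕ) then bH n (m - (p : ℕ)) else -(bbar n (m - (p : ℕ))))
      ∘ₗ (ccast (show m + 1 - (p : ℕ) = (m - (p : ℕ)) + 1 by
            have := p.isLt; omega)).toLinearMap
      ∘ₗ LinearMap.proj (⟨(p : ℕ), by have := p.isLt; omega⟩ : Fin (m + 2)))
    + ((if Even ((p : ℕ) + 1) then nOp n (m - (p : ℕ))
          else LinearMap.id - tOp n (m - (p : ℕ)))
      ∘ₗ (ccast (show m + 1 - ((p : ℕ) + 1) = m - (p : ℕ) by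
            have := p.isLt; omega)).toLinearMap
      ∘ₗ LinearMap.proj (⟨(p : ℕ) + 1, by have := p.isLt; omega⟩ : Fin (m + 2)))

/-- Homology of composable maps f : M → N, g : N → P: ker g / im f. -/
def hmlgy {M N P : Type} [AddCommGroup M] [Module ℚ M] [AddCommGroup N]
    [Module ℚ N] [AddCommGroup P] [Module ℚ P]
    (f : M →ₗ[ℚ] N) (g : N →ₗ[ℚ] P) : Type :=
  LinearMap.ker g ⧸ Submodule.comap (LinearMap.ker g).subtype (LinearMap.range f)

/-- The reduced cyclic homology of ℚ[x]/(x^{n+1}) in odd degree 2m+1: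
homology of the total Tsygan complex at total degree 2m+1. -/
def HCodd (n m : ℕ) : Type := hmlgy (DT n (2 * m + 1)) (DT n (2 * m))


namespace TC

abbrev M := List ℕ →₀ ℚ

def wd (l : List ℕ) : M := Finsupp.single l 1

def lc (f : List ℕ → M) : M →ₗ[ℚ] M := Finsupp.linearCombination ℚ f

@[simp] lemma lc_wd (f : List ℕ → M) (l : List ℕ) : lc f (wd l) = f l := by
  simp [lc, wd]

abbrev Sp (S : Set (List ℕ)) : Submodule ℚ M := Finsupp.supported ℚ ℚ S

lemma wd_mem {S : Set (List ℕ)} {l : List ℕ} (h : l ∈ S) : wd l ∈ Sp S :=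
  Finsupp.single_mem_supported ℚ 1 h

lemma sp_eq (S : Set (List ℕ)) : Sp S = Submodule.span ℚ (Set.image wd S) :=
  Finsupp.supported_eq_span_single ℚ S

lemma sp_map {S : Set (List ℕ)} {N : Type*} [AddCommGroup N] [Module ℚ N] {U : Submodule ℚ N}
    (f : M →ₗ[ℚ] N)
    (h : ∀ l ∈ S, f (wd l) ∈ U) {x : M} (hx : x ∈ Sp S) : f x ∈ U := by
  rw [sp_eq] at hx
  have : Submodule.span ℚ (Set.image wd S) ≤ U.comap f := by
    rw [Submodule.span_le]
    rintro _ ⟨l, hl, rfl⟩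
    exact h l hl
  exact this hx

lemma sp_ext {S : Set (List ℕ)} {N : Type*} [AddCommGroup N] [Module ℚ N] (f g : M →ₗ[ℚ] N)
    (h : ∀ l ∈ S, f (wd l) = g (wd l)) {x : M} (hx : x ∈ Sp S) : f x = g x := by
  rw [sp_eq] at hx
  refine LinearMap.eqOn_span ?_ hx
  rintro _ ⟨l, hl, rfl⟩
  exact h l hl

lemma sp_mono {S T : Set (List ℕ)} (h : S ⊆ T) : Sp S ≤ Sp T := Finsupp.supported_mono h

/-- cons -/
def K (a : ℕ) : M →ₗ[ℚ] M := lc fun l => wd (a :: l)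
/-- snoc -/
def Sn (a : ℕ) : M →ₗ[ℚ] M := lc fun l => wd (l ++ [a])

@[simp] lemma K_wd (a l) : K a (wd l) = wd (a :: l) := by simp [K]
@[simp] lemma Sn_wd (a l) : Sn a (wd l) = wd (l ++ [a]) := by simp [Sn]

/-- truncated word: merged letter `a` in front of `r`. -/
def tr (n a : ℕ) (r : List ℕ) : M := if a ≤ n then wd (a :: r) else 0

def dw (n : ℕ) : ℕ → List ℕ → M
  | 0, a :: b :: r => tr n (a + b) r
  | i + 1, a :: r => - K a (dw n i r)
  | _, _ => 0

def bpw (n : ℕ) : List ℕ → M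
  | a :: b :: r => tr n (a + b) r - K a (bpw n (b :: r))
  | _ => 0

def rot (l : List ℕ) : List ℕ := l.getLast?.toList ++ l.dropLast

@[simp] lemma rot_nil : rot [] = [] := rfl
@[simp] lemma rot_concat (s : List ℕ) (a : ℕ) : rot (s ++ [a]) = a :: s := by simp [rot]

def tw (l : List ℕ) : M := ((-1 : ℚ) ^ (l.length - 1)) • wd (rot l)

lemma tw_concat (s : List ℕ) (a : ℕ) : tw (s ++ [a]) = ((-1 : ℚ) ^ s.length) • wd (a :: s) := by
  simp [tw]

def D (n i : ℕ) : M →ₗ[ℚ] M := lc (dw n i)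
def bp (n : ℕ) : M →ₗ[ℚ] M := lc (bpw n)
def t : M →ₗ[ℚ] M := lc tw
def b (n : ℕ) : M →ₗ[ℚ] M := bp n + D n 0 ∘ₗ t

@[simp] lemma D_wd (n i l) : D n i (wd l) = dw n i l := by simp [D]
@[simp] lemma bp_wd (n l) : bp n (wd l) = bpw n l := by simp [bp]
@[simp] lemma t_wd (l) : t (wd l) = tw l := by simp [t]

/-- words of length L -/
def Ln (L : ℕ) : Set (List ℕ) := {l | l.length = L}
/-- good words -/
def G (n L w : ℕ) : Set (List ℕ) := {l | l.length = L ∧ l.sum = w ∧ ∀ a ∈ l, 1 ≤ a ∧ a ≤ n}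

abbrev V (n L w : ℕ) : Submodule ℚ M := Sp (G n L w)

lemma V_le_Ln (n L w) : V n L w ≤ Sp (Ln L) := sp_mono fun _ h => h.1

lemma exists_concat {l : List ℕ} {L : ℕ} (h : l.length = L + 1) :
    ∃ s a, l = s ++ [a] ∧ s.length = L := by
  rcases List.eq_nil_or_concat l with rfl | ⟨s, a, rfl⟩
  · simp at h
  · exact ⟨s, a, by simp, by simpa using h⟩

/-! membership -/
lemma K_mem_Ln {a L x} (hx : x ∈ Sp (Ln L)) : K a x ∈ Sp (Ln (L + 1)) := by
  refine sp_map (K a) (fun l hl => ?_) hx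
  rw [K_wd]; exact wd_mem (by simpa [Ln] using hl)

lemma K_mem {n a L w x} (h1 : 1 ≤ a) (h2 : a ≤ n) (hx : x ∈ V n L w) :
    K a x ∈ V n (L + 1) (a + w) := by
  refine sp_map (K a) (fun l hl => ?_) hx
  rw [K_wd]; refine wd_mem ?_
  obtain ⟨h3, h4, h5⟩ := hl
  refine ⟨by simp [h3], by simp [h4], ?_⟩
  simp only [List.mem_cons, forall_eq_or_imp]
  exact ⟨⟨h1, h2⟩, h5⟩

lemma Sn_mem_Ln {a L x} (hx : x ∈ Sp (Ln L)) : Sn a x ∈ Sp (Ln (L + 1)) := by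
  refine sp_map (Sn a) (fun l hl => ?_) hx
  rw [Sn_wd]; exact wd_mem (by simpa [Ln] using hl)

lemma t_mem_Ln {L x} (hx : x ∈ Sp (Ln L)) : t x ∈ Sp (Ln L) := by
  refine sp_map t (fun l hl => ?_) hx
  rw [t_wd]
  rcases List.eq_nil_or_concat l with rfl | ⟨s, a, rfl⟩
  · simpa [tw] using wd_mem hl
  · rw [List.concat_eq_append] at *
    rw [tw_concat]
    exact Submodule.smul_mem _ _ (wd_mem (by simpa [Ln] using hl))

lemma t_mem {n L w x} (hx : x ∈ V n L w) : t x ∈ V n L w := by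
  refine sp_map t (fun l hl => ?_) hx
  rw [t_wd]
  rcases List.eq_nil_or_concat l with rfl | ⟨s, a, rfl⟩
  · simpa [tw] using wd_mem hl
  · rw [List.concat_eq_append] at *
    rw [tw_concat]
    refine Submodule.smul_mem _ _ (wd_mem ?_)
    obtain ⟨h3, h4, h5⟩ := hl
    refine ⟨by simpa using h3, by simpa [add_comm] using h4, ?_⟩
    intro c hc
    apply h5
    simp at hc ⊢
    tauto

lemma tr_mem {n a L w r} (h1 : 1 ≤ a) (hr : r ∈ G n L w) : tr n a r ∈ V n (L + 1) (a + w) := by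
  unfold tr
  split_ifs with h
  · have := K_mem h1 h (wd_mem hr)
    simpa using this
  · exact Submodule.zero_mem _

lemma G_cons {n a l L w} (h : a :: l ∈ G n L w) :
    1 ≤ a ∧ a ≤ n ∧ L = l.length + 1 ∧ w = a + l.sum ∧ l ∈ G n l.length l.sum := by
  obtain ⟨h3, h4, h5⟩ := h
  simp only [List.mem_cons, forall_eq_or_imp] at h5
  exact ⟨h5.1.1, h5.1.2, by simpa using h3.symm, by simpa using h4.symm, rfl, rfl, h5.2⟩

lemma D_mem_Ln {n L i x} (hx : x ∈ Sp (Ln (L + 1))) : D n i x ∈ Sp (Ln L) := by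
  refine sp_map (D n i) (fun l hl => ?_) hx
  rw [D_wd]
  clear hx x
  induction i generalizing l L with
  | zero =>
    match l, hl with
    | [], _ => simp [dw]
    | [a], _ => simp [dw]
    | a :: c :: r, hl =>
      simp only [dw, tr]
      split_ifs
      · exact wd_mem (by simpa [Ln] using hl)
      · simp
  | succ i ih =>
    match l, hl with
    | [], _ => simp [dw]
    | a :: r, hl =>
      simp only [dw]
      apply Submodule.neg_mem
      match L, hl with
      | 0, hl =>
        have : r = [] := by simpa [Ln] using hl
        subst this
        cases i <;> simp [dw]
      | L + 1, hl => exact K_mem_Ln (ih r (by simpa [Ln] using hl))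

lemma D0_mem {n L w x} (hx : x ∈ V n (L + 1) w) : D n 0 x ∈ V n L w := by
  refine sp_map (D n 0) (fun l hl => ?_) hx
  rw [D_wd]
  match l, hl with
  | [], _ => simp [dw]
  | [a], _ => simp [dw]
  | a :: c :: r, hl =>
    simp only [dw]
    obtain ⟨h1, -, h2, h3, h4⟩ := G_cons hl
    obtain ⟨h5, -, h6, h7, h8⟩ := G_cons h4
    have := tr_mem (n := n) (a := a + c) (by omega) h8
    convert this using 2 <;> simp at * <;> omega

lemma bpw_mem {n l L w} (hl : l ∈ G n (L + 1) w) : bpw n l ∈ V n L w := by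
  induction l generalizing L w with
  | nil => simp [bpw]
  | cons a l ih =>
    cases l with
    | nil => simp [bpw]
    | cons c r =>
      simp only [bpw]
      obtain ⟨h1, h1', h2, h3, h4⟩ := G_cons hl
      obtain ⟨h5, -, h6, h7, h8⟩ := G_cons h4
      refine Submodule.sub_mem _ ?_ ?_
      · have := tr_mem (n := n) (a := a + c) (by omega) h8
        convert this using 2 <;> simp at * <;> omega
      · have := K_mem h1 h1' (ih (L := r.length) (w := c + r.sum) (by simpa using h4))
        convert this using 2 <;> simp at * <;> omega

lemma bp_mem {n L w x} (hx : x ∈ V n (L + 1) w) : bp n x ∈ V n L w :=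
  sp_map (bp n) (fun l hl => by rw [bp_wd]; exact bpw_mem hl) hx

lemma b_mem {n L w x} (hx : x ∈ V n (L + 1) w) : b n x ∈ V n L w := by
  simp only [b, LinearMap.add_apply, LinearMap.comp_apply]
  exact Submodule.add_mem _ (bp_mem hx) (D0_mem (t_mem hx))

/-! ### face identities -/

lemma dw_zero_of_le {n i l} (h : l.length ≤ i + 1) : dw n i l = 0 := by
  induction i generalizing l with
  | zero =>
    match l, h with
    | [], _ => simp [dw]
    | [a], _ => simp [dw]
    | a :: c :: r, h => simp at h
  | succ i ih =>
    match l, h with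
    | [], _ => simp [dw]
    | a :: r, h => simp [dw, ih (l := r) (by simpa using h)]

lemma bpw_eq_sum (n l) : bpw n l = ∑ i ∈ Finset.range (l.length - 1), dw n i l := by
  induction l with
  | nil => simp [bpw]
  | cons a l ih =>
    match l, ih with
    | [], _ => simp [bpw]
    | c :: r, ih =>
      simp only [bpw, ih, List.length_cons, Nat.add_sub_cancel, map_sum]
      rw [Finset.sum_range_succ']
      simp only [dw, Finset.sum_neg_distrib]
      abel

lemma bp_eq_sum {n q x} (hx : x ∈ Sp (Ln (q + 1))) :
    bp n x = ∑ i ∈ Finset.range q, D n i x := by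
  have := sp_ext (bp n) (∑ i ∈ Finset.range q, D n i) (fun l hl => ?_) hx
  · simpa using this
  · have : l.length = q + 1 := hl
    simp [bpw_eq_sum, this]

lemma dw_concat_of_lt {n i s a} (h : i + 1 < s.length) : dw n i (s ++ [a]) = Sn a (dw n i s) := by
  induction i generalizing s with
  | zero =>
    match s, h with
    | c :: d :: r, _ =>
      simp only [List.cons_append, dw, tr]
      split_ifs <;> simp
  | succ i ih =>
    match s, h with
    | c :: r, h =>
      simp only [List.cons_append, dw, ih (s := r) (by simpa using h), map_neg, neg_inj]
      have : ∀ x : M, K c (Sn a x) = Sn a (K c x) := by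
        intro x
        refine sp_ext (S := Set.univ) (K c ∘ₗ Sn a) (Sn a ∘ₗ K c) ?_ (by simp)
        simp
      exact this _

lemma dw_concat_last {n s m l} : dw n s.length (s ++ [m, l]) =
    if m + l ≤ n then ((-1 : ℚ) ^ s.length) • wd (s ++ [m + l]) else 0 := by
  induction s with
  | nil => simp [dw, tr]
  | cons a s ih =>
    simp only [List.length_cons, List.cons_append, dw, ih]
    split_ifs <;> simp [pow_succ]

lemma t_Sn {a L x} (hx : x ∈ Sp (Ln L)) : t (Sn a x) = ((-1 : ℚ) ^ L) • K a x := by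
  refine sp_ext (t ∘ₗ Sn a) (((-1 : ℚ) ^ L) • K a) (fun l hl => ?_) hx
  have : l.length = L := hl
  simp [tw_concat, this]

lemma D_t {n i q x} (h : i + 1 < q) (hx : x ∈ Sp (Ln (q + 1))) :
    D n (i + 1) (t x) = t (D n i x) := by
  refine sp_ext (D n (i + 1) ∘ₗ t) (t ∘ₗ D n i) (fun l hl => ?_) hx
  obtain ⟨s, a, rfl, hs⟩ := exists_concat (L := q) hl
  simp only [LinearMap.comp_apply, t_wd, D_wd, tw_concat, map_smul, dw]
  rw [dw_concat_of_lt (by omega)]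
  obtain ⟨q, rfl⟩ : ∃ q', q = q' + 1 := ⟨q - 1, by omega⟩
  have hm : dw n i s ∈ Sp (Ln q) := by
    have := D_mem_Ln (n := n) (i := i) (wd_mem (S := Ln (q + 1)) hs)
    simpa using this
  rw [t_Sn hm, hs]
  simp [pow_succ]

lemma D0_t_t {n q x} (hx : x ∈ Sp (Ln (q + 2))) : D n 0 (t (t x)) = t (D n q x) := by
  refine sp_ext (D n 0 ∘ₗ t ∘ₗ t) (t ∘ₗ D n q) (fun l hl => ?_) hx
  obtain ⟨s', a, rfl, hs⟩ := exists_concat (L := q + 1) hl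
  obtain ⟨s, c, rfl, hs'⟩ := exists_concat (L := q) hs
  subst hs'
  have e : D n s.length (wd (s ++ [c] ++ [a])) =
      if c + a ≤ n then ((-1 : ℚ) ^ s.length) • wd (s ++ [c + a]) else 0 := by
    rw [D_wd, ← dw_concat_last]; simp
  rw [LinearMap.comp_apply, LinearMap.comp_apply, LinearMap.comp_apply, e]
  rw [t_wd, tw_concat, map_smul, t_wd, ← List.cons_append, tw_concat]
  simp only [map_smul, D_wd, dw, tr, smul_smul, List.length_append, List.length_cons,
    List.length_nil, ← pow_add]
  split_ifs
  · simp only [map_smul, t_wd, tw_concat, smul_smul, ← pow_add]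
    congr 1
    ring_nf
  · simp

lemma rot_rotate (l : List ℕ) : rot (l.rotate 1) = l := by
  cases l with
  | nil => simp
  | cons a l => simp

lemma rot_iter_rotate (l : List ℕ) (k : ℕ) : rot^[k] (l.rotate k) = l := by
  induction k with
  | zero => simp
  | succ k ih =>
    rw [Function.iterate_succ_apply, ← List.rotate_rotate, rot_rotate, ih]

lemma length_rot (l : List ℕ) : (rot l).length = l.length := by
  rcases List.eq_nil_or_concat l with rfl | ⟨s, a, rfl⟩
  · simp
  · simp

lemma t_pow_wd (l : List ℕ) (k : ℕ) :
    (t ^ k) (wd l) = ((-1 : ℚ) ^ ((l.length - 1) * k)) • wd (rot^[k] l) := by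
  induction k generalizing l with
  | zero => simp
  | succ k ih =>
    rw [pow_succ, Module.End.mul_apply, t_wd, tw, map_smul, ih, length_rot, smul_smul, ← pow_add,
      Function.iterate_succ_apply]
    congr 2
    ring

lemma t_pow_len {q x} (hx : x ∈ Sp (Ln (q + 1))) : (t ^ (q + 1)) x = x := by
  refine sp_ext (t ^ (q + 1)) LinearMap.id (fun l hl => ?_) hx
  have hl : l.length = q + 1 := hl
  rw [t_pow_wd, hl, LinearMap.id_apply]
  have h2 := rot_iter_rotate l (q + 1)
  rw [← hl, List.rotate_length, hl] at h2
  rw [h2, Nat.add_sub_cancel, Even.neg_one_pow (Nat.even_mul_succ_self q), one_smul]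

end TC

namespace TC

/-! ### cyclic identities -/

lemma bp_t {n q x} (hx : x ∈ Sp (Ln (q + 1))) :
    bp n (t x) + D n 0 (t (t x)) = D n 0 (t x) + t (bp n x) := by
  rw [bp_eq_sum (t_mem_Ln hx), bp_eq_sum hx]
  cases q with
  | zero =>
    have : ∀ y ∈ Sp (Ln 1), D n 0 y = 0 := by
      intro y hy
      refine sp_ext (D n 0) 0 (fun l hl => ?_) hy
      have hl : l.length = 1 := hl
      simp [dw_zero_of_le (n := n) (i := 0) (l := l) (by omega)]
    simp [this _ (t_mem_Ln hx), this _ (t_mem_Ln (t_mem_Ln hx))]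
  | succ q =>
    rw [Finset.sum_range_succ', Finset.sum_range_succ, D0_t_t hx, map_add, map_sum]
    rw [Finset.sum_congr rfl (fun i hi => D_t (n := n) (i := i) (by
      have := Finset.mem_range.mp hi; omega) hx)]
    abel

lemma b_apply (n x) : b n x = bp n x + D n 0 (t x) := rfl

lemma b_one_sub_t {n q x} (hx : x ∈ Sp (Ln (q + 1))) :
    b n (x - t x) = bp n x - t (bp n x) := by
  have := bp_t (n := n) hx
  rw [map_sub, b_apply, b_apply, this]
  abel

def Nm (L : ℕ) : M →ₗ[ℚ] M := ∑ i ∈ Finset.range L, t ^ i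

lemma Nm_apply (L x) : Nm L x = ∑ i ∈ Finset.range L, (t ^ i) x := by
  simp [Nm]

lemma tpow_mem_Ln {L x} (k : ℕ) (hx : x ∈ Sp (Ln L)) : (t ^ k) x ∈ Sp (Ln L) := by
  induction k with
  | zero => simpa using hx
  | succ k ih => rw [pow_succ', Module.End.mul_apply]; exact t_mem_Ln ih

lemma tpow_mem {n L w x} (k : ℕ) (hx : x ∈ V n L w) : (t ^ k) x ∈ V n L w := by
  induction k with
  | zero => simpa using hx
  | succ k ih => rw [pow_succ', Module.End.mul_apply]; exact t_mem ih

lemma Nm_mem_Ln {L L' x} (hx : x ∈ Sp (Ln L)) : Nm L' x ∈ Sp (Ln L) := by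
  rw [Nm_apply]; exact Submodule.sum_mem _ fun i _ => tpow_mem_Ln i hx

lemma Nm_mem {n L L' w x} (hx : x ∈ V n L w) : Nm L' x ∈ V n L w := by
  rw [Nm_apply]; exact Submodule.sum_mem _ fun i _ => tpow_mem i hx

lemma t_pow_len' {L x} (hx : x ∈ Sp (Ln L)) : (t ^ L) x = x := by
  cases L with
  | zero => simp
  | succ q => exact t_pow_len hx

lemma t_Nm {L x} (hx : x ∈ Sp (Ln L)) : t (Nm L x) = Nm L x := by
  have h := Finset.sum_range_succ' (fun i => (t ^ i) x) L
  rw [Finset.sum_range_succ, t_pow_len' hx] at h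
  simp only [pow_zero, Module.End.one_apply, add_left_inj] at h
  rw [Nm_apply, map_sum, h]
  simp [pow_succ']

lemma Nm_t {L x} (hx : x ∈ Sp (Ln L)) : Nm L (t x) = Nm L x := by
  rw [← t_Nm hx, Nm_apply, Nm_apply, map_sum]
  refine Finset.sum_congr rfl fun i _ => ?_
  rw [← Module.End.mul_apply, ← Module.End.mul_apply, pow_mul_comm']

lemma Nm_tpow {L x} (k : ℕ) (hx : x ∈ Sp (Ln L)) : Nm L ((t ^ k) x) = Nm L x := by
  induction k with
  | zero => simp
  | succ k ih => rw [pow_succ', Module.End.mul_apply, Nm_t (tpow_mem_Ln k hx), ih]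

/-- L t^j = t^j δ_{q-j} -/
lemma last_tpow {n q x} (j : ℕ) (hj : j < q) (hx : x ∈ Sp (Ln (q + 1))) :
    D n 0 (t ((t ^ (j + 1)) x)) = (t ^ (j + 1)) (D n (q - 1 - j) x) := by
  induction j generalizing x with
  | zero =>
    obtain ⟨q, rfl⟩ : ∃ q', q = q' + 1 := ⟨q - 1, by omega⟩
    simpa using D0_t_t hx
  | succ j ih =>
    have h1 := ih (x := t x) (by omega) (t_mem_Ln hx)
    rw [pow_succ t (j + 1), Module.End.mul_apply, h1, Module.End.mul_apply]
    obtain ⟨i, hi⟩ : ∃ i, q - 1 - j = i + 1 := ⟨q - 1 - j - 1, by omega⟩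
    rw [hi, D_t (by omega) hx]
    congr 4
    omega

lemma face_inv {n q x} (i : ℕ) (hi : i < q) (hx : x ∈ Sp (Ln (q + 1))) (hxt : t x = x) :
    D n i x = (t ^ i) (D n 0 (t x)) := by
  induction i with
  | zero => simp [hxt]
  | succ i ih =>
    have := D_t (n := n) (i := i) (by omega) hx
    rw [hxt] at this
    rw [this, ih (by omega), pow_succ', Module.End.mul_apply]

lemma bp_Nm {n q x} (hx : x ∈ Sp (Ln (q + 1))) :
    bp n (Nm (q + 1) x) = Nm q (b n x) := by
  have h1 : bp n (Nm (q + 1) x) = Nm q (D n 0 (t (Nm (q + 1) x))) := by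
    rw [bp_eq_sum (Nm_mem_Ln hx), Nm_apply q]
    refine Finset.sum_congr rfl fun i hi => ?_
    exact face_inv i (Finset.mem_range.mp hi) (Nm_mem_Ln hx) (t_Nm hx)
  have h2 : Nm q (b n x) = Nm q (D n 0 (t (Nm (q + 1) x))) := by
    rw [b_apply, bp_eq_sum hx, Nm_apply (q + 1), map_sum, map_sum, map_add, map_sum, map_sum,
      Finset.sum_range_succ', pow_zero, Module.End.one_apply]
    congr 1
    rw [← Finset.sum_range_reflect]
    refine Finset.sum_congr rfl fun i hi => ?_
    have hi := Finset.mem_range.mp hi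
    rw [last_tpow i hi hx, Nm_tpow _ (D_mem_Ln hx)]
  rw [h1, h2]

lemma ker_one_sub_t_gen {U : Submodule ℚ M} {q x} (hx : x ∈ U) (h : x - t x = 0) :
    ∃ y ∈ U, x = Nm (q + 1) y := by
  refine ⟨((q + 1 : ℚ)⁻¹) • x, Submodule.smul_mem _ _ hx, ?_⟩
  have h' : t x = x := (sub_eq_zero.mp h).symm
  have h2 : ∀ i, (t ^ i) x = x := by
    intro i
    induction i with
    | zero => simp
    | succ i ih => rw [pow_succ', Module.End.mul_apply, ih, h']
  rw [map_smul, Nm_apply]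
  simp only [h2, Finset.sum_const, Finset.card_range, ← Nat.cast_smul_eq_nsmul ℚ, smul_smul]
  push_cast
  rw [inv_mul_cancel₀ (by positivity), one_smul]

lemma ker_Nm_gen {U : Submodule ℚ M} (hU : ∀ x ∈ U, t x ∈ U) {q x} (hx : x ∈ U)
    (h : Nm (q + 1) x = 0) : ∃ y ∈ U, x = y - t y := by
  have tpow_mem : ∀ j, (t ^ j) x ∈ U := by
    intro j
    induction j with
    | zero => simpa using hx
    | succ k ih => rw [pow_succ', Module.End.mul_apply]; exact hU _ ih
  refine ⟨((q + 1 : ℚ)⁻¹) • ∑ i ∈ Finset.range (q + 1), ∑ j ∈ Finset.range i, (t ^ j) x,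
    Submodule.smul_mem _ _ (Submodule.sum_mem _ fun i _ => Submodule.sum_mem _ fun j _ =>
      tpow_mem j), ?_⟩
  rw [map_smul, ← smul_sub, map_sum, ← Finset.sum_sub_distrib]
  have h2 : ∀ i, ∑ j ∈ Finset.range i, (t ^ j) x - t (∑ j ∈ Finset.range i, (t ^ j) x)
      = x - (t ^ i) x := by
    intro i
    induction i with
    | zero => simp
    | succ i ih =>
      rw [Finset.sum_range_succ, map_add, add_sub_add_comm, ih, pow_succ', Module.End.mul_apply]
      abel
  simp only [h2]
  rw [Finset.sum_sub_distrib, ← Nm_apply, h, sub_zero]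
  simp only [Finset.sum_const, Finset.card_range, ← Nat.cast_smul_eq_nsmul ℚ, smul_smul]
  push_cast
  rw [inv_mul_cancel₀ (by positivity), one_smul]

lemma ker_one_sub_t {n q w x} (hx : x ∈ V n (q + 1) w) (h : x - t x = 0) :
    ∃ y ∈ V n (q + 1) w, x = Nm (q + 1) y := ker_one_sub_t_gen hx h

lemma ker_Nm {n q w x} (hx : x ∈ V n (q + 1) w) (h : Nm (q + 1) x = 0) :
    ∃ y ∈ V n (q + 1) w, x = y - t y := ker_Nm_gen (fun _ => t_mem) hx h

/-! ### squares vanish -/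

def lm (n a : ℕ) : M →ₗ[ℚ] M := lc fun l => D n 0 (wd (a :: l))
def rm (n a : ℕ) : M →ₗ[ℚ] M := lc fun l => D n 0 (t (wd (a :: l)))

@[simp] lemma lm_nil (n a) : lm n a (wd []) = 0 := by simp [lm, dw]
@[simp] lemma lm_cons (n a c r) : lm n a (wd (c :: r)) = tr n (a + c) r := by simp [lm, dw]
@[simp] lemma rm_nil (n a) : rm n a (wd []) = 0 := by
  have := tw_concat [] a
  simp at this
  simp [rm, dw, this]
lemma rm_concat (n a c r) : rm n a (wd (r ++ [c])) =
    ((-1 : ℚ) ^ (r.length + 1)) • tr n (c + a) r := by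
  simp only [rm, lc_wd, t_wd, ← List.cons_append, tw_concat]
  simp [dw]

lemma lin_ext {f g : M →ₗ[ℚ] M} (h : ∀ l, f (wd l) = g (wd l)) (x : M) : f x = g x :=
  sp_ext (S := Set.univ) f g (fun l _ => h l) (by simp)

lemma bp_K (n a x) : bp n (K a x) = lm n a x - K a (bp n x) := by
  refine lin_ext (f := bp n ∘ₗ K a) (g := lm n a - K a ∘ₗ bp n) (fun l => ?_) x
  cases l with
  | nil => simp [bpw]
  | cons c r => simp [bpw]

lemma b_K (n a x) : b n (K a x) = lm n a x - K a (bp n x) + rm n a x := by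
  rw [b_apply, bp_K]
  congr 1
  exact lin_ext (f := D n 0 ∘ₗ t ∘ₗ K a) (g := rm n a) (fun l => by simp [rm]) x

def Kt (n a : ℕ) : M →ₗ[ℚ] M := if a ≤ n then K a else 0

lemma lm_K (n a c x) : lm n a (K c x) = Kt n (a + c) x := by
  refine lin_ext (f := lm n a ∘ₗ K c) (g := Kt n (a + c)) (fun l => ?_) x
  simp only [LinearMap.comp_apply, K_wd, lm_cons, tr, Kt]
  split_ifs <;> simp

lemma tr_eq (n a r) : tr n a r = Kt n a (wd r) := by
  simp only [tr, Kt]; split_ifs <;> simp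

lemma bp_lm (n a x) : bp n (lm n a x) = lm n a (bp n x) := by
  refine lin_ext (f := bp n ∘ₗ lm n a) (g := lm n a ∘ₗ bp n) (fun l => ?_) x
  simp only [LinearMap.comp_apply]
  cases l with
  | nil => simp [bpw]
  | cons c r =>
    have h1 : bp n (wd (c :: r)) = lm n c (wd r) - K c (bp n (wd r)) := by rw [← bp_K]; simp
    rw [h1, map_sub, lm_K, lm_cons, tr_eq]
    have h2 : bp n (Kt n (a + c) (wd r)) =
        (if a + c ≤ n then lm n (a + c) (wd r) else 0) - Kt n (a + c) (bp n (wd r)) := by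
      unfold Kt
      split_ifs
      · rw [bp_K]
      · simp
    rw [h2]
    congr 1
    cases r with
    | nil => simp
    | cons d r =>
      simp only [lm_cons]
      have e1 : a + c + d = a + (c + d) := by ring
      rw [e1]
      by_cases h3 : a + c ≤ n <;> by_cases h4 : c + d ≤ n <;> by_cases h5 : a + (c + d) ≤ n <;>
        first | omega | simp [tr, h3, h4, h5]

lemma bp_bp (n x) : bp n (bp n x) = 0 := by
  refine lin_ext (f := bp n ∘ₗ bp n) (g := 0) (fun l => ?_) x
  induction l with
  | nil => simp [bpw]
  | cons a l ih =>
    have h1 : bp n (wd (a :: l)) = lm n a (wd l) - K a (bp n (wd l)) := by rw [← bp_K]; simp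
    simp only [LinearMap.comp_apply, LinearMap.zero_apply] at *
    rw [h1, map_sub, bp_K, bp_lm, ih]
    simp

lemma bpw_mem_Ln {n l} : bpw n l ∈ Sp (Ln (l.length - 1)) := by
  cases l with
  | nil => simp [bpw]
  | cons a l =>
    rw [← bp_wd, bp_eq_sum (wd_mem (S := Ln (l.length + 1)) (by simp [Ln]))]
    refine Submodule.sum_mem _ fun i _ => ?_
    exact D_mem_Ln (wd_mem (by simp [Ln]))

lemma bpw_concat (n s d) : bpw n (s ++ [d]) = Sn d (bpw n s) + dw n (s.length - 1) (s ++ [d]) := by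
  rcases List.eq_nil_or_concat s with rfl | ⟨s, a, rfl⟩
  · simp [bpw, dw]
  · rw [bpw_eq_sum, bpw_eq_sum, map_sum]
    simp only [List.concat_eq_append, List.length_append, List.length_cons, List.length_nil,
      zero_add, Nat.add_sub_cancel]
    rw [Finset.sum_range_succ]
    congr 1
    refine Finset.sum_congr rfl fun i hi => ?_
    have := Finset.mem_range.mp hi
    rw [dw_concat_of_lt (by simp; omega)]

lemma rm_Sn {n a d L x} (hx : x ∈ Sp (Ln L)) :
    rm n a (Sn d x) = ((-1 : ℚ) ^ (L + 1)) • Kt n (d + a) x := by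
  refine sp_ext (rm n a ∘ₗ Sn d) (((-1 : ℚ) ^ (L + 1)) • Kt n (d + a)) (fun l hl => ?_) hx
  have hl : l.length = L := hl
  simp [rm_concat, hl, tr_eq]

lemma rm_right (n a d s) : rm n a (bpw n (s ++ [d])) =
    ((-1 : ℚ) ^ (s.length + 1)) • (if d + a ≤ n then rm n (d + a) (wd s) - K (d + a) (bpw n s)
      else 0) := by
  rcases List.eq_nil_or_concat s with rfl | ⟨s, e, rfl⟩
  · simp [bpw]
  · rw [List.concat_eq_append, bpw_concat, map_add]
    have h := bpw_mem_Ln (n := n) (l := s ++ [e])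
    rw [List.length_append, List.length_singleton, Nat.add_sub_cancel] at h
    rw [rm_Sn h]
    have h2 : dw n ((s ++ [e]).length - 1) (s ++ [e] ++ [d]) =
        if e + d ≤ n then ((-1 : ℚ) ^ s.length) • wd (s ++ [e + d]) else 0 := by
      rw [← dw_concat_last]; simp
    rw [List.length_append, List.length_singleton, Nat.add_sub_cancel] at h2
    rw [List.length_append, List.length_singleton, Nat.add_sub_cancel, h2]
    have h3 : rm n a (if e + d ≤ n then ((-1 : ℚ) ^ s.length) • wd (s ++ [e + d]) else 0)
        = - (if e + d + a ≤ n then wd ((e + d + a) :: s) else 0) := by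
      by_cases h4 : e + d ≤ n
      · rw [if_pos h4, map_smul, rm_concat, smul_smul, ← pow_add, tr]
        rw [Odd.neg_one_pow (by use s.length; ring)]
        split_ifs <;> simp
      · rw [if_neg h4, if_neg (by omega)]; simp
    rw [h3]
    by_cases h5 : d + a ≤ n
    · rw [if_pos h5, Kt, if_pos h5, rm_concat, smul_sub, smul_smul, ← pow_add,
        Odd.neg_one_pow (n := s.length + 1 + 1 + (s.length + 1)) (by use s.length + 1; ring), tr,
        ← add_assoc, pow_succ (-1 : ℚ) (s.length + 1)]
      simp only [neg_smul, one_smul, mul_neg, mul_one]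
      abel
    · rw [if_neg h5, Kt, if_neg h5, if_neg (by omega)]; simp

lemma b_lm (n a l) : b n (lm n a (wd l)) = lm n a (bpw n l) +
    (match l with | [] => 0 | c :: r => if a + c ≤ n then rm n (a + c) (wd r) else 0) := by
  rw [b_apply, bp_lm, bp_wd]
  congr 1
  cases l with
  | nil => simp
  | cons c r =>
    simp only [lm_cons, tr]
    split_ifs
    · simp [rm]
    · simp

lemma b_b_K (n a l) : b n (b n (wd (a :: l))) = 0 := by
  have h1 : b n (wd (a :: l)) = lm n a (wd l) - K a (bp n (wd l)) + rm n a (wd l) := by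
    rw [← b_K]; simp
  rw [h1, map_add, map_sub, b_lm, b_K, bp_bp, bp_wd]
  rcases List.eq_nil_or_concat l with rfl | ⟨s, d, rfl⟩
  · simp [bpw]
  · rw [List.concat_eq_append, rm_right, rm_concat]
    have h2 : b n (tr n (d + a) s) = if d + a ≤ n then
        lm n (d + a) (wd s) - K (d + a) (bpw n s) + rm n (d + a) (wd s) else 0 := by
      rw [tr_eq, Kt]
      split_ifs
      · rw [b_K, bp_wd]
      · simp
    rw [map_smul, h2]
    have h3 : (match (s ++ [d]) with
        | [] => 0 | c :: r => if a + c ≤ n then rm n (a + c) (wd r) else 0)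
        = - ((-1 : ℚ) ^ (s.length + 1)) • (if d + a ≤ n then lm n (d + a) (wd s) else 0) := by
      cases s with
      | nil => simp
      | cons c r =>
        simp only [List.cons_append, rm_concat, lm_cons, tr, List.length_cons]
        have e1 : d + (a + c) = d + a + c := by ring
        rw [e1]
        split_ifs <;> first | omega | simp [pow_succ]
    rw [h3]
    split_ifs
    · simp only [smul_sub, smul_add, neg_smul, map_zero]
      abel
    · simp

lemma b_b (n x) : b n (b n x) = 0 := by
  refine lin_ext (f := b n ∘ₗ b n) (g := 0) (fun l => ?_) x
  cases l with
  | nil => simp [b_apply, bpw, tw, dw]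
  | cons a l => exact b_b_K n a l

end TC

namespace TC

/-! ### bar complex -/

def h0w : List ℕ → M
  | [] => 0
  | a :: r => if 2 ≤ a then wd (1 :: (a - 1) :: r) else 0

def h0 : M →ₗ[ℚ] M := lc h0w

def phw (n : ℕ) : List ℕ → M
  | a :: c :: r => if a + c = n + 1 then wd r else 0
  | _ => 0

def ph (n : ℕ) : M →ₗ[ℚ] M := lc (phw n)

def prw (e : ℕ) : List ℕ → M
  | [] => 0
  | a :: r => if a = e then wd r else 0

def pr (e : ℕ) : M →ₗ[ℚ] M := lc (prw e)

lemma pr_K (e a x) : pr e (K a x) = if a = e then x else 0 := by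
  by_cases h : a = e
  · rw [if_pos h]
    exact lin_ext (f := pr e ∘ₗ K a) (g := LinearMap.id) (fun l => by simp [pr, prw, h]) x
  · rw [if_neg h]
    exact lin_ext (f := pr e ∘ₗ K a) (g := 0) (fun l => by simp [pr, prw, h]) x

lemma K_inj {a x} (h : K a x = 0) : x = 0 := by
  have := pr_K a a x
  rw [h] at this
  simpa using this.symm

lemma h0_K (a x) : h0 (K a x) = if 2 ≤ a then K 1 (K (a - 1) x) else 0 := by
  split_ifs with h
  · exact lin_ext (f := h0 ∘ₗ K a) (g := K 1 ∘ₗ K (a - 1)) (fun l => by simp [h0, h0w, h]) x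
  · exact lin_ext (f := h0 ∘ₗ K a) (g := 0) (fun l => by simp [h0, h0w, h]) x

lemma h0_mem {n L w x} (hx : x ∈ V n L w) : h0 x ∈ V n (L + 1) w := by
  refine sp_map h0 (fun l hl => ?_) hx
  simp only [h0, lc_wd]
  match l, hl with
  | [], hl => simp [h0w]
  | a :: r, hl =>
    simp only [h0w]
    split_ifs with h
    · refine wd_mem ?_
      obtain ⟨h1, h2, h3, h4, h5, h6, h7⟩ := G_cons hl
      refine ⟨by simp [h3], by simp; omega, ?_⟩
      simp only [List.mem_cons, forall_eq_or_imp]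
      exact ⟨⟨by omega, by omega⟩, ⟨by omega, by omega⟩, h7⟩
    · simp

lemma ph_mem {n L w w' x} (hw : w' + (n + 1) = w) (hx : x ∈ V n (L + 2) w) :
    ph n x ∈ V n L w' := by
  refine sp_map (ph n) (fun l hl => ?_) hx
  simp only [ph, lc_wd]
  match l, hl with
  | [], hl => simp [phw]
  | [a], hl => simp [phw]
  | a :: c :: r, hl =>
    simp only [phw]
    split_ifs with h
    · refine wd_mem ?_
      obtain ⟨h1, h2, h3, h4, h5⟩ := G_cons hl
      obtain ⟨h1, h2, h3', h4', h5, h6, h7⟩ := G_cons h5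
      simp at h3 h4
      exact ⟨by omega, by omega, h7⟩
    · simp

lemma ph_zero {n L w x} (hw : w < n + 1) (hx : x ∈ V n (L + 2) w) : ph n x = 0 := by
  refine sp_ext (ph n) 0 (fun l hl => ?_) hx
  simp only [ph, lc_wd, LinearMap.zero_apply]
  match l, hl with
  | [], hl => simp [phw]
  | [a], hl => simp [phw]
  | a :: c :: r, hl =>
    simp only [phw]
    split_ifs with h
    · obtain ⟨h1, h2, h3, h4, h5⟩ := G_cons hl
      simp at h4
      omega
    · rfl

lemma homotopy {n L w x} (hx : x ∈ V n (L + 2) w) :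
    bp n (h0 x) + h0 (bp n x) = x - K 1 (K n (ph n x)) := by
  refine sp_ext (bp n ∘ₗ h0 + h0 ∘ₗ bp n) (LinearMap.id - K 1 ∘ₗ K n ∘ₗ ph n) (fun l hl => ?_) hx
  simp only [LinearMap.add_apply, LinearMap.sub_apply, LinearMap.comp_apply, LinearMap.id_apply]
  match l, hl with
  | [], hl => simp [G] at hl
  | [a], hl => simp [G] at hl
  | a :: c :: r, hl =>
    obtain ⟨h1, h2, h3, h4, h5⟩ := G_cons hl
    obtain ⟨h1', h2', -⟩ := G_cons h5
    have e1 : wd (a :: c :: r) = K a (wd (c :: r)) := by simp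
    have e2 : wd (c :: r) = K c (wd r) := by simp
    rw [e1, bp_K, map_sub, h0_K, h0_K, e2, lm_K]
    have e3 : h0 (Kt n (a + c) (wd r)) = if a + c ≤ n then K 1 (K (a + c - 1) (wd r)) else 0 := by
      unfold Kt
      split_ifs with h
      · rw [h0_K, if_pos (by omega)]
      · simp
    have e4 : ph n (K a (K c (wd r))) = if a + c = n + 1 then wd r else 0 := by
      simp [ph, phw]
    rw [e3, e4]
    by_cases ha : 2 ≤ a
    · rw [if_pos ha, if_pos ha, bp_K, bp_K, lm_K, lm_K, map_sub]
      have e5 : 1 + (a - 1) = a := by omega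
      have e6 : a - 1 + c = a + c - 1 := by omega
      rw [e5, e6]
      unfold Kt
      rw [if_pos h2]
      by_cases h6 : a + c ≤ n
      · rw [if_pos h6, if_pos (by omega), if_neg (by omega)]
        simp
      · by_cases h7 : a + c = n + 1
        · rw [if_neg h6, if_pos (by omega), if_pos h7, h7]
          simp
          abel
        · rw [if_neg h6, if_neg (by omega), if_neg h7]
          simp
    · have : a = 1 := by omega
      subst this
      rw [if_neg ha, if_neg ha]
      by_cases h6 : 1 + c ≤ n
      · rw [if_pos h6, if_neg (by omega)]
        simp
      · rw [if_neg h6, if_pos (by omega)]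
        have : c = n := by omega
        subst this
        simp

lemma lm_n {n L w x} (hx : x ∈ V n L w) : lm n n x = 0 := by
  refine sp_ext (lm n n) 0 (fun l hl => ?_) hx
  match l, hl with
  | [], hl => simp
  | a :: r, hl =>
    obtain ⟨h1, h2, -⟩ := G_cons hl
    rw [lm_cons, tr, if_neg (by omega)]
    simp

lemma bp_KK {n L w x} (hx : x ∈ V n L w) : bp n (K 1 (K n x)) = K 1 (K n (bp n x)) := by
  rw [bp_K, bp_K, lm_n hx, lm_K, Kt, if_neg (by omega)]
  simp

def BX (n L w : ℕ) : Prop := ∀ z ∈ V n L w, bp n z = 0 → ∃ y ∈ V n (L + 1) w, z = bp n y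

/-- reduction of a bar cycle -/
lemma bar_red {n L w z} (hz : z ∈ V n (L + 2) w) (hb : bp n z = 0) :
    z = K 1 (K n (ph n z)) + bp n (h0 z) := by
  have := homotopy hz
  rw [hb, map_zero, add_zero] at this
  rw [this]; abel

lemma bar_red_cycle {n L w w' z} (hz : z ∈ V n (L + 2) w) (hw : w' + (n + 1) = w)
    (hb : bp n z = 0) : bp n (ph n z) = 0 := by
  have h1 := congrArg (bp n) (bar_red hz hb)
  rw [hb, map_add, bp_bp, add_zero, bp_KK (ph_mem hw hz)] at h1
  exact K_inj (K_inj h1.symm)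

lemma KK_mem {n L w w' x} (hn : 1 ≤ n) (hw : w' + (n + 1) = w) (hx : x ∈ V n L w') :
    K 1 (K n x) ∈ V n (L + 2) w := by
  have := K_mem (le_refl 1) hn (K_mem hn le_rfl hx)
  convert this using 2
  omega

lemma BX_step {n L w} (hn : 1 ≤ n) (h : ∀ w', w' + (n + 1) = w → BX n L w') :
    BX n (L + 2) w := by
  intro z hz hb
  have h1 := bar_red hz hb
  by_cases hw : w < n + 1
  · rw [ph_zero hw hz] at h1
    exact ⟨h0 z, h0_mem hz, by simpa using h1⟩
  · have hw' : w - (n + 1) + (n + 1) = w := by omega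
    obtain ⟨y, hy, hy'⟩ := h _ hw' _ (ph_mem hw' hz) (bar_red_cycle hz hw' hb)
    refine ⟨K 1 (K n y) + h0 z, Submodule.add_mem _ (KK_mem hn hw' hy) (h0_mem hz), ?_⟩
    rw [map_add, bp_KK hy, ← hy']
    exact h1

lemma B1 {n : ℕ} (hn : 1 ≤ n) (i w : ℕ) (hw : w < (n + 1) * i) : BX n (2 * i) w := by
  induction i generalizing w with
  | zero => simp at hw
  | succ i ih =>
    refine BX_step hn fun w' hw' => ih w' ?_
    rw [mul_add] at hw
    omega

lemma h0_one {n w x} (hx : x ∈ V n 1 w) (hw : 1 < w) : bp n (h0 x) = x := by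
  refine sp_ext (bp n ∘ₗ h0) LinearMap.id (fun l hl => ?_) hx
  match l, hl with
  | [], hl => simp [G] at hl
  | [a], hl =>
    obtain ⟨h1, h2, h3, h4, h5⟩ := G_cons hl
    simp at h4
    have e : 1 + (a - 1) = a := by omega
    have h2 : 2 ≤ a := by omega
    simp only [h0, LinearMap.comp_apply, lc_wd, h0w]
    rw [if_pos h2, bp_wd]
    simp [bpw, tr, e]
    omega
  | a :: c :: r, hl => simp [G] at hl

lemma B2 {n : ℕ} (hn : 1 ≤ n) (j w : ℕ) (hw : (n + 1) * j + 1 < w) : BX n (2 * j + 1) w := by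
  induction j generalizing w with
  | zero =>
    intro z hz _
    exact ⟨h0 z, h0_mem hz, (h0_one hz (by simpa using hw)).symm⟩
  | succ j ih =>
    refine BX_step (L := 2 * j + 1) hn fun w' hw' => ih w' ?_
    rw [mul_add] at hw
    omega

def P (n : ℕ) : ℕ → List ℕ
  | 0 => []
  | k + 1 => 1 :: n :: P n k

lemma P_mem {n} (hn : 1 ≤ n) (k) : P n k ∈ G n (2 * k) ((n + 1) * k) := by
  induction k with
  | zero => simp [P, G]
  | succ k ih =>
    obtain ⟨h1, h2, h3⟩ := ih
    refine ⟨by simp [P, h1]; omega, by simp [P, h2]; ring, ?_⟩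
    simp only [P, List.mem_cons, forall_eq_or_imp]
    exact ⟨⟨by omega, by omega⟩, ⟨by omega, by omega⟩, h3⟩

lemma u_mem {n} (hn : 1 ≤ n) (k) : P n k ++ [1] ∈ G n (2 * k + 1) ((n + 1) * k + 1) := by
  obtain ⟨h1, h2, h3⟩ := P_mem hn k
  refine ⟨by simp [h1], by simp [h2], ?_⟩
  intro a ha
  simp at ha
  rcases ha with ha | rfl
  · exact h3 a ha
  · omega

lemma bp_u {n} (hn : 1 ≤ n) (k) : bp n (wd (P n k ++ [1])) = 0 := by
  induction k with
  | zero => simp [P, bpw]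
  | succ k ih =>
    have : wd (P n (k + 1) ++ [1]) = K 1 (K n (wd (P n k ++ [1]))) := by simp [P]
    rw [this, bp_KK (wd_mem (u_mem hn k)), ih]; simp

lemma B3 {n : ℕ} (hn : 1 ≤ n) (k : ℕ) (z : M) (hz : z ∈ V n (2 * k + 1) ((n + 1) * k + 1))
    (hb : bp n z = 0) : ∃ c : ℚ, ∃ y ∈ V n (2 * k + 2) ((n + 1) * k + 1),
      z = c • wd (P n k ++ [1]) + bp n y := by
  induction k generalizing z with
  | zero =>
    have : z ∈ Submodule.span ℚ {wd [1]} := by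
      have h := hz
      refine sp_map (LinearMap.id) (fun l hl => ?_) h
      have : l = [1] := by
        match l, hl with
        | [], hl => simp [G] at hl
        | [a], hl =>
          have := hl.2.1
          simp at this
          simp [this]
        | a :: c :: r, hl => simp [G] at hl
      subst this
      exact Submodule.mem_span_singleton_self _
    obtain ⟨c, rfl⟩ := Submodule.mem_span_singleton.mp this
    exact ⟨c, 0, Submodule.zero_mem _, by simp [P]⟩
  | succ k ih =>
    have hw' : (n + 1) * k + 1 + (n + 1) = (n + 1) * (k + 1) + 1 := by ring
    have hz' : z ∈ V n (2 * k + 1 + 2) ((n + 1) * (k + 1) + 1) := hz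
    have h1 := bar_red hz' hb
    obtain ⟨c, y, hy, hy'⟩ := ih _ (ph_mem hw' hz') (bar_red_cycle hz' hw' hb)
    refine ⟨c, K 1 (K n y) + h0 z, Submodule.add_mem _ (KK_mem hn hw' hy) (h0_mem hz'), ?_⟩
    rw [map_add, bp_KK hy]
    rw [hy'] at h1
    simp only [map_add, map_smul, K_wd] at h1
    rw [← add_assoc]
    exact h1

/-! ### Hochschild columns -/

def GF (n L w e : ℕ) : Set (List ℕ) := {l | l ∈ G n L w ∧ e ≤ l.headI}

lemma GF_zero {n L w x} (hx : x ∈ Sp (GF n (L + 1) w (n + 1))) : x = 0 := by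
  refine sp_ext LinearMap.id 0 (fun l hl => ?_) hx
  exfalso
  obtain ⟨h1, h2⟩ := hl
  match l, h1, h2 with
  | [], h1, h2 => simp [G] at h1
  | a :: r, h1, h2 =>
    obtain ⟨h3, h4, -⟩ := G_cons h1
    simp at h2
    omega

lemma pr_mem {n L w w' e x} (hw : e + w' = w) (hx : x ∈ V n (L + 1) w) :
    pr e x ∈ V n L w' := by
  refine sp_map (pr e) (fun l hl => ?_) hx
  simp only [pr, lc_wd]
  match l, hl with
  | [], hl => simp [prw]
  | a :: r, hl =>
    simp only [prw]
    split_ifs with h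
    · refine wd_mem ?_
      obtain ⟨h1, h2, h3, h4, h5, h6, h7⟩ := G_cons hl
      exact ⟨by omega, by omega, h7⟩
    · simp

lemma sub_pr_mem {n L w e x} (hx : x ∈ Sp (GF n (L + 1) w e)) :
    x - K e (pr e x) ∈ Sp (GF n (L + 1) w (e + 1)) := by
  refine sp_map (LinearMap.id - K e ∘ₗ pr e) (fun l hl => ?_) hx
  simp only [LinearMap.sub_apply, LinearMap.comp_apply, LinearMap.id_apply, pr, lc_wd]
  obtain ⟨h1, h2⟩ := hl
  match l, h1, h2 with
  | [], h1, h2 => simp [G] at h1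
  | a :: r, h1, h2 =>
    simp only [prw]
    simp at h2
    split_ifs with h
    · simp [h]
    · simp only [map_zero, sub_zero]
      exact wd_mem ⟨h1, by simp; omega⟩

/-- the perturbation terms raise the first letter -/
lemma pert_mem {n L w' e y} (he : 1 ≤ e) (hy : y ∈ V n (L + 1) w') :
    lm n e y + rm n e y ∈ Sp (GF n (L + 1) (e + w') (e + 1)) := by
  refine sp_map (lm n e + rm n e) (fun l hl => ?_) hy
  have key : ∀ c r, 1 ≤ c → r ∈ G n L (w' - c) → c ≤ w' →
      tr n (e + c) r ∈ Sp (GF n (L + 1) (e + w') (e + 1)) := by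
    intro c r hc hr hcw
    unfold tr
    split_ifs with h
    · refine wd_mem ⟨?_, by simp; omega⟩
      obtain ⟨h1, h2, h3⟩ := hr
      refine ⟨by simp [h1], by simp; omega, ?_⟩
      simp only [List.mem_cons, forall_eq_or_imp]
      exact ⟨⟨by omega, by omega⟩, h3⟩
    · simp
  rw [LinearMap.add_apply]
  refine Submodule.add_mem _ ?_ ?_
  · match l, hl with
    | [], hl => simp
    | c :: r, hl =>
      obtain ⟨h1, h2, h3, h4, h5, h6, h7⟩ := G_cons hl
      rw [lm_cons]
      exact key c r h1 ⟨by omega, by omega, h7⟩ (by omega)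
  · obtain ⟨s, c, rfl, hs⟩ := exists_concat hl.1
    rw [rm_concat, add_comm c e]
    obtain ⟨h1, h2, h3⟩ := hl
    simp at h2
    refine Submodule.smul_mem _ _ (key c s ?_ ⟨hs, by omega, ?_⟩ (by omega))
    · exact (h3 c (by simp)).1
    · intro a ha; exact h3 a (by simp [ha])

lemma pr_GF {n L w e x} (hx : x ∈ Sp (GF n (L + 1) w (e + 1))) : pr e x = 0 := by
  refine sp_ext (pr e) 0 (fun l hl => ?_) hx
  obtain ⟨h1, h2⟩ := hl
  match l, h1, h2 with
  | [], h1, h2 => simp at h2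
  | a :: r, h1, h2 =>
    simp at h2
    simp only [pr, lc_wd, prw]
    rw [if_neg (by omega)]; simp

lemma rm_lm_nil (n e) {x} (hx : x ∈ Sp (Ln 0)) : lm n e x + rm n e x = 0 := by
  refine sp_ext (lm n e + rm n e) 0 (fun l hl => ?_) hx
  have : l = [] := by simpa [Ln] using hl
  subst this; simp

lemma pr_b {n L w e x} (hx : x ∈ Sp (GF n (L + 2) w e)) :
    pr e (b n x) = - bp n (pr e x) := by
  refine sp_ext (pr e ∘ₗ b n) (- (bp n ∘ₗ pr e)) (fun l hl => ?_) hx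
  obtain ⟨h1, h2⟩ := hl
  match l, h1, h2 with
  | [], h1, h2 => simp [G] at h1
  | a :: r, h1, h2 =>
    simp at h2
    obtain ⟨h3, h4, h5, h6, h7⟩ := G_cons h1
    have e1 : wd (a :: r) = K a (wd r) := by simp
    have hr : r.length = L + 1 := by omega
    rw [hr] at h7
    have hp : lm n a (wd r) + rm n a (wd r) ∈ Sp (GF n (L + 1) (a + r.sum) (e + 1)) :=
      sp_mono (S := GF n (L + 1) (a + r.sum) (a + 1)) (T := GF n (L + 1) (a + r.sum) (e + 1))
        (fun l hl => ⟨hl.1, le_trans (by omega) hl.2⟩) (pert_mem h3 (wd_mem h7))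
    have h8 := pr_GF hp
    simp only [LinearMap.comp_apply, LinearMap.neg_apply]
    rw [e1, b_K, pr_K]
    have e2 : lm n a (wd r) - K a (bp n (wd r)) + rm n a (wd r) =
      (lm n a (wd r) + rm n a (wd r)) - K a (bp n (wd r)) := by abel
    rw [e2, map_sub, h8, pr_K]
    split_ifs <;> simp

lemma GF_le (n L w e) : Sp (GF n L w e) ≤ V n L w := sp_mono fun _ h => h.1

lemma Bfil {n L w N0 : ℕ} (U : Submodule ℚ M) (hU : ∀ y ∈ V n (L + 3) w, b n y ∈ U)
    (hN : N0 ≤ n + 1)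
    (hbase : ∀ z ∈ Sp (GF n (L + 2) w N0), b n z = 0 → z ∈ U)
    (hbar : ∀ e w', 1 ≤ e → e < N0 → e + w' = w → BX n (L + 1) w') (h1N : 1 ≤ N0) :
    ∀ z ∈ V n (L + 2) w, b n z = 0 → z ∈ U := by
  have main : ∀ d e, e + d = N0 → 1 ≤ e → ∀ z ∈ Sp (GF n (L + 2) w e), b n z = 0 → z ∈ U := by
    intro d
    induction d with
    | zero =>
      intro e he _
      simp at he
      subst he
      exact hbase
    | succ d ih =>
      intro e he he1 z hz hb
      by_cases hew : e ≤ w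
      · have hw' : e + (w - e) = w := by omega
        have hcyc : bp n (pr e z) = 0 := by
          have := pr_b hz
          rw [hb, map_zero] at this
          simpa using this.symm
        obtain ⟨y, hy, hy'⟩ := hbar e (w - e) he1 (by omega) hw' _
          (pr_mem hw' (GF_le _ _ _ _ hz)) hcyc
        have hKy : K e y ∈ V n (L + 3) w := by
          have := K_mem he1 (by omega : e ≤ n) hy
          rwa [hw'] at this
        have hz' : z + b n (K e y) ∈ Sp (GF n (L + 2) w (e + 1)) := by
          have h3 := sub_pr_mem hz
          have h4 := pert_mem he1 hy
          rw [hw'] at h4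
          have h5 := Submodule.add_mem _ h3 h4
          convert h5 using 1
          rw [b_K, hy']
          abel
        have h6 := ih (e + 1) (by omega) (by omega) _ hz' (by rw [map_add, hb, b_b, add_zero])
        have h7 := Submodule.sub_mem _ h6 (hU _ hKy)
        simpa using h7
      · have : z = 0 := by
          refine sp_ext LinearMap.id 0 (fun l hl => ?_) hz
          exfalso
          obtain ⟨h1, h2⟩ := hl
          match l, h1, h2 with
          | [], h1, h2 => simp [G] at h1
          | a :: r, h1, h2 =>
            obtain ⟨h3, h4, h5, h6, -⟩ := G_cons h1
            simp at h2
            omega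
        rw [this]; exact Submodule.zero_mem _
  intro z hz
  refine main (N0 - 1) 1 (by omega) le_rfl z ?_
  refine sp_mono (S := G n (L + 2) w) (T := GF n (L + 2) w 1) (fun l hl => ⟨hl, ?_⟩) hz
  match l, hl with
  | [], hl => simp [G] at hl
  | a :: r, hl => exact (G_cons hl).1

lemma b_exact {n L w : ℕ} (hbar : ∀ e w', 1 ≤ e → e ≤ n → e + w' = w → BX n (L + 1) w')
    (z : M) (hz : z ∈ V n (L + 2) w) (hb : b n z = 0) : ∃ y ∈ V n (L + 3) w, b n y = z := by
  have := Bfil (N0 := n + 1) ((V n (L + 3) w).map (b n))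
    (fun y hy => Submodule.mem_map_of_mem hy) le_rfl
    (fun z hz _ => by rw [GF_zero hz]; exact Submodule.zero_mem _)
    (fun e w' h1 h2 h3 => hbar e w' h1 (by omega) h3) (by omega) z hz hb
  exact this

end TC

namespace TC

/-! ### the cyclic functional -/

def psi (n : ℕ) : List ℕ → ℚ
  | [] => 1
  | [_] => 0
  | a :: c :: r => if n < a + c then psi n r else 0

def Psi (n : ℕ) : M →ₗ[ℚ] ℚ := Finsupp.linearCombination ℚ (psi n)

@[simp] lemma Psi_wd (n l) : Psi n (wd l) = psi n l := by simp [Psi, wd]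

def omw (n : ℕ) : List ℕ → ℚ
  | _ :: c :: r => c * psi n r
  | _ => 0

def om (n : ℕ) : M →ₗ[ℚ] ℚ := Finsupp.linearCombination ℚ (omw n)

@[simp] lemma om_wd (n l) : om n (wd l) = omw n l := by simp [om, wd]

lemma lin_ext_Q {f g : M →ₗ[ℚ] ℚ} (h : ∀ l, f (wd l) = g (wd l)) (x : M) : f x = g x :=
  sp_ext (S := Set.univ) f g (fun l _ => h l) (by simp)

lemma Psi_KK (n a c x) : Psi n (K a (K c x)) = if n < a + c then Psi n x else 0 := by
  split_ifs with h
  · exact lin_ext_Q (f := Psi n ∘ₗ K a ∘ₗ K c) (g := Psi n) (fun l => by simp [psi, h]) x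
  · refine lin_ext_Q (f := Psi n ∘ₗ K a ∘ₗ K c) (g := 0) (fun l => ?_) x
    simp [psi]; intro h'; exact absurd h' h

lemma om_KK (n a c x) : om n (K a (K c x)) = c * Psi n x :=
  lin_ext_Q (f := om n ∘ₗ K a ∘ₗ K c) (g := (c : ℚ) • Psi n) (fun l => by simp [omw]) x

lemma Psi_bpw (n k : ℕ) (r : List ℕ) (hr : r.length = 2 * k + 1) :
    Psi n (bpw n r) = psi n r.tail - psi n r.dropLast := by
  induction k generalizing r with
  | zero =>
    match r, hr with
    | [a], _ => simp [bpw]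
  | succ k ih =>
    match r, hr with
    | a :: c :: d :: s, hr =>
      have h1 : (d :: s).length = 2 * k + 1 := by simp at hr ⊢; omega
      have h2 := ih _ h1
      have h3 : (a :: c :: d :: s).dropLast = a :: c :: (d :: s).dropLast := by simp
      rw [h3]
      have e : bpw n (a :: c :: d :: s) = tr n (a + c) (d :: s) - (K a (tr n (c + d) s) -
          K a (K c (bpw n (d :: s)))) := by
        simp [bpw]
      rw [e, map_sub, map_sub, Psi_KK, h2]
      have e1 : Psi n (tr n (a + c) (d :: s)) =
          if a + c ≤ n then (if n < a + c + d then psi n s else 0) else 0 := by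
        unfold tr
        split_ifs with h h'
        · simp [psi, h']
        · simp [psi]; intro h''; omega
        · simp
      have e2 : Psi n (K a (tr n (c + d) s)) =
          if c + d ≤ n then (if n < a + c + d then psi n s else 0) else 0 := by
        unfold tr
        split_ifs with h h'
        · simp [psi]; intro h''; omega
        · simp [psi]; intro h''; omega
        · simp
      rw [e1, e2]
      simp only [List.tail_cons, psi]
      split_ifs <;> first | omega | ring

lemma psi_sum (n k : ℕ) (r : List ℕ) (hr : r.length = 2 * k) (h : psi n r ≠ 0) :
    (n + 1) * k ≤ r.sum := by
  induction k generalizing r with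
  | zero => simp
  | succ k ih =>
    match r, hr with
    | a :: c :: s, hr =>
      simp only [psi] at h
      split_ifs at h with h'
      · have := ih s (by simp at hr; omega) h
        simp only [List.sum_cons]
        rw [mul_add]; omega
      · simp at h

lemma om_b {n k y} (hy : y ∈ V n (2 * k + 3) ((n + 1) * (k + 1))) : om n (b n y) = 0 := by
  refine sp_ext (om n ∘ₗ b n) 0 (fun l hl => ?_) hy
  match l, hl with
  | [], hl => simp [G] at hl
  | [a], hl => simp [G] at hl
  | [a, c], hl => simp [G] at hl
  | a :: c :: d :: s, hl =>
    obtain ⟨h1, h2, h3⟩ := hl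
    have hc : 1 ≤ c := (h3 c (by simp)).1
    have ha : 1 ≤ a := (h3 a (by simp)).1
    have hlen : (d :: s).length = 2 * k + 1 := by simp at h1 ⊢; omega
    have hs : s.length = 2 * k := by simpa using hlen
    obtain ⟨r, e, hr, hrl⟩ := exists_concat hlen
    have he : 1 ≤ e := (h3 e (by rw [hr]; simp)).1
    have hd : 1 ≤ d := (h3 d (by simp)).1
    have hPsi := Psi_bpw n k _ hlen
    have hdrop : (d :: s).dropLast = r := by rw [hr]; simp
    rw [hdrop, List.tail_cons] at hPsi
    have s1 : a + (c + (d + s.sum)) = (n + 1) * (k + 1) := by simpa using h2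
    have s2 : d + s.sum = r.sum + e := by
      have := congrArg List.sum hr
      simpa using this
    have e0 : wd (a :: c :: d :: s) = K a (wd (c :: d :: s)) := by simp
    simp only [LinearMap.comp_apply, LinearMap.zero_apply]
    rw [e0, b_K]
    have e1 : rm n a (wd (c :: d :: s)) = tr n (e + a) (c :: r) := by
      rw [hr, ← List.cons_append, rm_concat]
      have : Even ((c :: r).length + 1) := ⟨k + 1, by simp [hrl]; ring⟩
      rw [this.neg_one_pow, one_smul]
    have e2 : K a (bp n (wd (c :: d :: s))) = K a (tr n (c + d) s) - K a (K c (bpw n (d :: s))) := by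
      simp [bpw]
    rw [e1, e2, lm_cons, map_add, map_sub, map_sub, om_KK, hPsi]
    have f1 : om n (tr n (a + c) (d :: s)) = d * psi n s := by
      by_cases hp : psi n s = 0
      · unfold tr; split_ifs <;> simp [omw, hp]
      · have := psi_sum n k s hs hp
        rw [mul_add] at s1
        rw [tr, if_pos (by omega)]; simp [omw]
    have f2 : om n (K a (tr n (c + d) s)) = (c + d) * psi n s := by
      by_cases hp : psi n s = 0
      · unfold tr; split_ifs <;> simp [omw, hp]
      · have := psi_sum n k s hs hp
        rw [mul_add] at s1
        rw [tr, if_pos (by omega)]; simp [omw]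
    have f3 : om n (tr n (e + a) (c :: r)) = c * psi n r := by
      by_cases hp : psi n r = 0
      · unfold tr; split_ifs <;> simp [omw, hp]
      · have := psi_sum n k r hrl hp
        rw [mul_add] at s1
        rw [tr, if_pos (by omega)]; simp [omw]
    rw [f1, f2, f3]; ring

/-- the exceptional cycle -/
def cc (n k : ℕ) : M := K n (wd (P n k ++ [1]))

lemma psi_P (n k) : psi n (P n k) = 1 := by
  induction k with
  | zero => simp [P, psi]
  | succ k ih => simp only [P, psi]; rw [if_pos (by omega), ih]

lemma psi_P' (n k) : psi n (n :: (P n k ++ [1])) = 1 := by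
  induction k with
  | zero => simp [P, psi]
  | succ k ih => simp only [P, psi, List.cons_append]; rw [if_pos (by omega), ih]

lemma cc_mem {n} (hn : 1 ≤ n) (k) : cc n k ∈ V n (2 * k + 2) ((n + 1) * (k + 1)) := by
  have := K_mem hn le_rfl (wd_mem (u_mem hn k))
  have e : n + ((n + 1) * k + 1) = (n + 1) * (k + 1) := by ring
  rw [e] at this
  exact this

lemma t_cc {n} (hn : 1 ≤ n) (k) : t (cc n k) = - wd (1 :: n :: P n k) := by
  have : cc n k = wd ((n :: P n k) ++ [1]) := by simp [cc]
  have h := (P_mem hn k).1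
  rw [this, t_wd, tw_concat]
  have : Odd (n :: P n k).length := ⟨k, by simp [h]⟩
  rw [this.neg_one_pow, neg_smul, one_smul]

lemma om_cc (n k) : om n (cc n k) = 1 := by
  cases k with
  | zero => simp [cc, P, omw, psi]
  | succ k =>
    have := psi_P' n k
    simp only [cc, P, List.cons_append, K_wd, om_wd, omw, this]; simp

lemma bp_cc {n} (hn : 1 ≤ n) (k) : bp n (cc n k) = 0 := by
  rw [cc, bp_K, lm_n (wd_mem (u_mem hn k)), bp_u hn]; simp

/-- boundary weight -/
lemma bdry0 {n} (hn : 1 ≤ n) (k : ℕ) (z : M) (hz : z ∈ V n (2 * k + 2) ((n + 1) * (k + 1)))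
    (hb : b n z = 0) : ∃ c : ℚ, ∃ y ∈ V n (2 * k + 3) ((n + 1) * (k + 1)),
      z = b n y + c • cc n k := by
  have key := Bfil (L := 2 * k) (N0 := n)
    (((V n (2 * k + 3) ((n + 1) * (k + 1))).map (b n)) ⊔ Submodule.span ℚ {cc n k})
    (fun y hy => Submodule.mem_sup_left (Submodule.mem_map_of_mem hy)) (by omega)
    (w := (n + 1) * (k + 1)) ?_ ?_ hn z hz hb
  · obtain ⟨_, ⟨y, hy, rfl⟩, _, h2, rfl⟩ := Submodule.mem_sup.mp key
    obtain ⟨c, rfl⟩ := Submodule.mem_span_singleton.mp h2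
    exact ⟨c, y, hy, rfl⟩
  · intro z hz hb
    have hw' : n + ((n + 1) * k + 1) = (n + 1) * (k + 1) := by ring
    have h1 : z = K n (pr n z) := sub_eq_zero.mp (GF_zero (sub_pr_mem hz))
    have hcyc : bp n (pr n z) = 0 := by
      have := pr_b hz
      rw [hb, map_zero] at this
      simpa using this.symm
    obtain ⟨c, y, hy, h2⟩ := B3 hn k _ (pr_mem hw' (GF_le _ _ _ _ hz)) hcyc
    have h3 := pert_mem hn hy
    have h4 := GF_zero h3
    have hKy := K_mem hn le_rfl hy
    rw [hw'] at hKy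
    have h5 : b n (K n y) = - K n (bp n y) := by
      rw [b_K]
      have : lm n n y - K n (bp n y) + rm n n y = (lm n n y + rm n n y) - K n (bp n y) := by abel
      rw [this, h4, zero_sub]
    have h6 : z = c • cc n k - b n (K n y) := by
      rw [h5, h1, h2, cc]; simp
    rw [h6]
    exact Submodule.sub_mem _ (Submodule.mem_sup_right (Submodule.smul_mem _ _
      (Submodule.mem_span_singleton_self _)))
      (Submodule.mem_sup_left (Submodule.mem_map_of_mem hKy))
  · intro e w' he1 he2 hw
    refine B2 hn k w' ?_
    rw [mul_add] at hw
    omega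

lemma bdry {n} (hn : 1 ≤ n) (k : ℕ) (z : M) (hz : z ∈ V n (2 * k + 2) ((n + 1) * (k + 1)))
    (hb : b n z = 0) : ∃ y ∈ V n (2 * k + 3) ((n + 1) * (k + 1)),
      ∃ y' ∈ V n (2 * k + 2) ((n + 1) * (k + 1)), z = b n y + (y' - t y') := by
  have hc := cc_mem hn k
  have h1 : b n (cc n k - t (cc n k)) = 0 := by
    rw [b_one_sub_t (q := 2 * k + 1) (V_le_Ln _ _ _ hc), bp_cc hn]; simp
  obtain ⟨c, y, hy, h2⟩ := bdry0 hn k _ (Submodule.sub_mem _ hc (t_mem hc)) h1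
  have h3 := congrArg (om n) h2
  rw [map_sub, map_add, om_b hy, map_smul, om_cc, t_cc hn, map_neg, om_wd] at h3
  simp only [omw, psi_P] at h3
  have h4 : c = n + 1 := by simp at h3; linarith
  have hne : (n + 1 : ℚ) ≠ 0 := by positivity
  obtain ⟨c', y1, hy1, h5⟩ := bdry0 hn k z hz hb
  refine ⟨y1 - (c' * (n + 1 : ℚ)⁻¹) • y, Submodule.sub_mem _ hy1 (Submodule.smul_mem _ _ hy),
    (c' * (n + 1 : ℚ)⁻¹) • cc n k, Submodule.smul_mem _ _ hc, ?_⟩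
  rw [map_sub, map_smul, map_smul, ← smul_sub, h2, h5, smul_add, smul_smul, h4,
    mul_assoc, inv_mul_cancel₀ hne, mul_one]
  abel

end TC

namespace TC

def Q (n k w : ℕ) : Prop := ∀ z ∈ V n (2 * k + 2) w, ∀ v ∈ V n (2 * k + 1) w,
  b n z = v - t v → ∃ y ∈ V n (2 * k + 3) w, ∃ y' ∈ V n (2 * k + 2) w, z = b n y + (y' - t y')

lemma len_le_sum {n L w l} (h : l ∈ G n L w) : L ≤ w := by
  obtain ⟨h1, h2, h3⟩ := h
  have := List.length_le_sum_of_one_le l (fun a ha => (h3 a ha).1)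
  omega

lemma V_zero {n L w x} (h : w < L) (hx : x ∈ V n L w) : x = 0 := by
  refine sp_ext LinearMap.id 0 (fun l hl => ?_) hx
  have := len_le_sum hl
  omega

lemma Q_small {n w : ℕ} (hn : 1 ≤ n) (d : ℕ) : ∀ k, w < 2 * k + 2 + d → w < (n + 1) * (k + 1) →
    Q n k w := by
  induction d with
  | zero =>
    intro k h1 _ z hz v _ _
    exact ⟨0, Submodule.zero_mem _, 0, Submodule.zero_mem _, by simp [V_zero h1 hz]⟩
  | succ d ih =>
    intro k h1 h2 z hz v hv hzv
    have hk1 : w < (n + 1) * (k + 1 + 1) := by rw [mul_add]; omega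
    have c1 : bp n (Nm (2 * k + 2) z) = 0 := by
      rw [bp_Nm (q := 2 * k + 1) (V_le_Ln _ _ _ hz), hzv, map_sub, Nm_t (V_le_Ln _ _ _ hv), sub_self]
    obtain ⟨v', hv', c2⟩ := B1 hn (k + 1) w h2 _ (Nm_mem hz) c1
    have hv' : v' ∈ V n (2 * k + 3) w := hv'
    have c3 : b n (v' - t v') = 0 := by
      rw [b_one_sub_t (q := 2 * k + 2) (V_le_Ln _ _ _ hv'), ← c2, t_Nm (V_le_Ln _ _ _ hz), sub_self]
    obtain ⟨z', hz', c4⟩ := b_exact (L := 2 * k + 1) (w := w)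
      (fun e w' _ _ hw => B1 hn (k + 1) w' (by omega)) _ (Submodule.sub_mem _ hv' (t_mem hv')) c3
    obtain ⟨y, hy, y', hy', c5⟩ := ih (k + 1) (by omega) hk1 z' hz' v' hv' c4
    have hy' : y' ∈ V n (2 * k + 4) w := hy'
    have c6 : v' - t v' = bp n y' - t (bp n y') := by
      rw [← c4, c5, map_add, b_b, zero_add, b_one_sub_t (q := 2 * k + 3) (V_le_Ln _ _ _ hy')]
    have c7 : (v' - bp n y') - t (v' - bp n y') = 0 := by
      rw [map_sub, sub_sub_sub_comm, c6, sub_self]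
    obtain ⟨s, hs, c8⟩ := ker_one_sub_t (Submodule.sub_mem _ hv' (bp_mem hy')) c7
    have c9 : Nm (2 * k + 2) (z - b n s) = 0 := by
      have e := congrArg (bp n) c8
      rw [map_sub, bp_bp, sub_zero, bp_Nm (V_le_Ln _ _ _ hs), ← c2] at e
      rw [map_sub, e, sub_self]
    obtain ⟨u, hu, c10⟩ := ker_Nm (Submodule.sub_mem _ hz (b_mem hs)) c9
    exact ⟨s, hs, u, hu, by rw [← c10]; abel⟩

lemma cyc_large {n w : ℕ} (hn : 1 ≤ n) (k : ℕ) (hw : (n + 1) * (k + 1) ≤ w) (z : M)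
    (hz : z ∈ V n (2 * k + 2) w) (hb : b n z = 0) :
    ∃ y ∈ V n (2 * k + 3) w, ∃ y' ∈ V n (2 * k + 2) w, z = b n y + (y' - t y') := by
  rcases Nat.eq_or_lt_of_le hw with rfl | hw
  · exact bdry hn k z hz hb
  · obtain ⟨y, hy, h⟩ := b_exact (L := 2 * k) (w := w)
      (fun e w' h1 h2 h3 => B2 hn k w' (by rw [mul_add] at hw; omega)) z hz hb
    exact ⟨y, hy, 0, Submodule.zero_mem _, by simp [h]⟩

lemma Q_large_end {n w : ℕ} (hn : 1 ≤ n) (k : ℕ) (hw : (n + 1) * (k + 1) ≤ w) (z s : M)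
    (hz : z ∈ V n (2 * k + 2) w) (hs : s ∈ V n (2 * k + 2) w)
    (hb : b n z = bp n s - t (bp n s)) :
    ∃ y ∈ V n (2 * k + 3) w, ∃ y' ∈ V n (2 * k + 2) w, z = b n y + (y' - t y') := by
  obtain ⟨y, hy, y', hy', h⟩ := cyc_large hn k hw (z - (s - t s))
    (Submodule.sub_mem _ hz (Submodule.sub_mem _ hs (t_mem hs)))
    (by rw [map_sub, b_one_sub_t (q := 2 * k + 1) (V_le_Ln _ _ _ hs), hb, sub_self])
  refine ⟨y, hy, y' + s, Submodule.add_mem _ hy' hs, ?_⟩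
  rw [sub_eq_iff_eq_add] at h
  rw [h, map_add]; abel

lemma Q_large {n w : ℕ} (hn : 1 ≤ n) (k : ℕ) (hw : (n + 1) * (k + 1) ≤ w) : Q n k w := by
  induction k with
  | zero =>
    intro z hz v hv hzv
    have h1 : bp n v = 0 := by
      refine sp_ext (bp n) 0 (fun l hl => ?_) hv
      match l, hl with
      | [], _ => simp [bpw]
      | [a], _ => simp [bpw]
      | a :: c :: r, hl => simp [G] at hl
    obtain ⟨s, hs, h2⟩ := B2 hn 0 w (by simp at hw ⊢; omega) v hv h1
    exact Q_large_end hn 0 hw z s hz hs (by rw [hzv, h2])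
  | succ k ih =>
    intro z hz v hv hzv
    have hw0 : (n + 1) * (k + 1) ≤ w := by rw [mul_add] at hw; omega
    have hv : v ∈ V n (2 * k + 3) w := hv
    have c1 : bp n v - t (bp n v) = 0 := by
      rw [← b_one_sub_t (q := 2 * k + 2) (V_le_Ln _ _ _ hv), ← hzv, b_b]
    obtain ⟨u, hu, c2⟩ := ker_one_sub_t (q := 2 * k + 1) (bp_mem hv) c1
    have c3 : Nm (2 * k + 1) (b n u) = 0 := by
      rw [← bp_Nm (V_le_Ln _ _ _ hu), ← c2, bp_bp]
    obtain ⟨v1, hv1, c4⟩ := ker_Nm (b_mem hu) c3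
    obtain ⟨y, hy, y', hy', c5⟩ := ih hw0 u hu v1 hv1 c4
    have c6 : bp n (v - Nm (2 * k + 3) y) = 0 := by
      rw [map_sub, c2, c5, map_add, map_sub, Nm_t (V_le_Ln _ _ _ hy'), sub_self, add_zero,
        bp_Nm (q := 2 * k + 2) (V_le_Ln _ _ _ hy), sub_self]
    obtain ⟨s, hs, c7⟩ := B2 hn (k + 1) w (by rw [mul_add _ (k + 1)] at hw; omega) _
      (Submodule.sub_mem _ hv (Nm_mem hy)) c6
    refine Q_large_end hn (k + 1) hw z s hz hs ?_
    rw [hzv, ← c7, map_sub, t_Nm (V_le_Ln _ _ _ hy)]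
    abel

lemma Q_all {n : ℕ} (hn : 1 ≤ n) (k w : ℕ) : Q n k w := by
  by_cases h : w < (n + 1) * (k + 1)
  · exact Q_small hn (w + 1) k (by omega) h
  · exact Q_large hn k (by omega)

/-! ### all weights together -/

def GW (n L : ℕ) : Set (List ℕ) := {l | l.length = L ∧ ∀ a ∈ l, 1 ≤ a ∧ a ≤ n}

abbrev W (n L : ℕ) : Submodule ℚ M := Sp (GW n L)

lemma W_le_Ln (n L) : W n L ≤ Sp (Ln L) := sp_mono fun _ h => h.1
lemma V_le_W (n L w) : V n L w ≤ W n L := sp_mono fun _ h => ⟨h.1, h.2.2⟩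
lemma GW_G {n L l} (h : l ∈ GW n L) : l ∈ G n L l.sum := ⟨h.1, rfl, h.2⟩

lemma t_memW {n L x} (hx : x ∈ W n L) : t x ∈ W n L :=
  sp_map t (fun _ hl => V_le_W _ _ _ (t_mem (wd_mem (GW_G hl)))) hx
lemma bp_memW {n L x} (hx : x ∈ W n (L + 1)) : bp n x ∈ W n L :=
  sp_map (bp n) (fun _ hl => V_le_W _ _ _ (bp_mem (wd_mem (GW_G hl)))) hx
lemma b_memW {n L x} (hx : x ∈ W n (L + 1)) : b n x ∈ W n L :=
  sp_map (b n) (fun _ hl => V_le_W _ _ _ (b_mem (wd_mem (GW_G hl)))) hx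

def pw (w : ℕ) : M →ₗ[ℚ] M := lc fun l => if l.sum = w then wd l else 0

lemma pw_self {n L w x} (hx : x ∈ V n L w) : pw w x = x := by
  refine sp_ext (pw w) LinearMap.id (fun l hl => ?_) hx
  have := hl.2.1
  simp [pw, this]

lemma pw_ne {n L w w' x} (h : w ≠ w') (hx : x ∈ V n L w) : pw w' x = 0 := by
  refine sp_ext (pw w') 0 (fun l hl => ?_) hx
  have := hl.2.1
  simp [pw, this, h]

lemma pw_memW {n L x} (w) (hx : x ∈ W n L) : pw w x ∈ V n L w := by
  refine sp_map (pw w) (fun l hl => ?_) hx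
  simp only [pw, lc_wd]
  split_ifs with h
  · exact wd_mem ⟨hl.1, h, hl.2⟩
  · simp

lemma pw_comm {n L L'} (f : M →ₗ[ℚ] M) (hf : ∀ w x, x ∈ V n L w → f x ∈ V n L' w) (w : ℕ) {x}
    (hx : x ∈ W n L) : pw w (f x) = f (pw w x) := by
  refine sp_ext (pw w ∘ₗ f) (f ∘ₗ pw w) (fun l hl => ?_) hx
  have h1 := wd_mem (GW_G hl)
  simp only [LinearMap.comp_apply]
  by_cases h : l.sum = w
  · subst h
    rw [pw_self h1, pw_self (hf _ _ h1)]
  · rw [pw_ne h h1, pw_ne h (hf _ _ h1), map_zero]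

lemma sum_pw {n L x} (hx : x ∈ W n L) : x = ∑ w ∈ Finset.range (L * n + 1), pw w x := by
  have := sp_ext LinearMap.id (∑ w ∈ Finset.range (L * n + 1), pw w) (fun l hl => ?_) hx
  · simpa using this
  · have h := List.sum_le_card_nsmul l n (fun a ha => (hl.2 a ha).2)
    rw [hl.1, smul_eq_mul] at h
    simp [pw, LinearMap.sum_apply]
    intro h'; omega

lemma Q_W (n k : ℕ) (z v : M) (hz : z ∈ W n (2 * k + 2)) (hv : v ∈ W n (2 * k + 1))
    (h : b n z = v - t v) : ∃ y ∈ W n (2 * k + 3), ∃ y' ∈ W n (2 * k + 2),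
      z = b n y + (y' - t y') := by
  rcases Nat.eq_zero_or_pos n with rfl | hn
  · refine ⟨0, Submodule.zero_mem _, 0, Submodule.zero_mem _, ?_⟩
    have : z = 0 := by
      refine sp_ext LinearMap.id 0 (fun l hl => ?_) hz
      match l, hl with
      | [], hl => simp [GW] at hl
      | a :: r, hl =>
        have := hl.2 a (by simp)
        omega
    simp [this]
  · have key : ∀ w, ∃ y ∈ V n (2 * k + 3) w, ∃ y' ∈ V n (2 * k + 2) w,
        pw w z = b n y + (y' - t y') := by
      intro w
      refine Q_all hn k w (pw w z) (pw_memW w hz) (pw w v) (pw_memW w hv) ?_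
      rw [← pw_comm (b n) (fun _ _ => b_mem) w hz, h, map_sub,
        ← pw_comm t (fun _ _ => t_mem) w hv]
    choose Y hY Y' hY' h2 using key
    refine ⟨∑ w ∈ Finset.range ((2 * k + 2) * n + 1), Y w,
      Submodule.sum_mem _ fun w _ => V_le_W _ _ _ (hY w),
      ∑ w ∈ Finset.range ((2 * k + 2) * n + 1), Y' w,
      Submodule.sum_mem _ fun w _ => V_le_W _ _ _ (hY' w), ?_⟩
    rw [map_sum, map_sum, ← Finset.sum_sub_distrib, ← Finset.sum_add_distrib]
    conv_lhs => rw [sum_pw hz]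
    exact Finset.sum_congr rfl fun w _ => h2 w

/-! ### rows -/

def dd (n p : ℕ) : M →ₗ[ℚ] M := if Even p then b n else - bp n
def rr (p L : ℕ) : M →ₗ[ℚ] M := if Even (p + 1) then Nm L else LinearMap.id - t

lemma rows {n T : ℕ} (Z : ℕ → M) (hZ : ∀ p ≤ T, Z p ∈ W n (T - p + 1))
    (hc : ∀ p < T, dd n p (Z p) + rr p (T - p) (Z (p + 1)) = 0)
    (h0 : ∃ y ∈ W n (T + 2), ∃ y' ∈ W n (T + 1), Z 0 = b n y + (y' - t y')) :
    ∃ Y : ℕ → M, (∀ p ≤ T + 1, Y p ∈ W n (T + 1 - p + 1)) ∧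
      ∀ p ≤ T, Z p = dd n p (Y p) + rr p (T - p + 1) (Y (p + 1)) := by
  have main : ∀ j ≤ T, ∃ Y : ℕ → M, (∀ p ≤ j + 1, Y p ∈ W n (T + 1 - p + 1)) ∧
      ∀ p ≤ j, Z p = dd n p (Y p) + rr p (T - p + 1) (Y (p + 1)) := by
    intro j
    induction j with
    | zero =>
      intro _
      obtain ⟨y, hy, y', hy', h⟩ := h0
      refine ⟨fun p => if p = 0 then y else y', ?_, ?_⟩
      · intro p hp
        rcases (by omega : p = 0 ∨ p = 1) with rfl | rfl
        · simpa using hy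
        · simpa using hy'
      · intro p hp
        have : p = 0 := by omega
        subst this
        simp [dd, rr, h]
    | succ j ih =>
      intro hj
      obtain ⟨Y, hY, hE⟩ := ih (by omega)
      obtain ⟨q, hq⟩ : ∃ q, T = j + 1 + q := ⟨T - (j + 1), by omega⟩
      have l1 : T - j = q + 1 := by omega
      have l2 : T - (j + 1) = q := by omega
      have l3 : T + 1 - (j + 1) = q + 1 := by omega
      have hZ1 := hZ (j + 1) hj
      have hY1 := hY (j + 1) le_rfl
      have hcj := hc j (by omega)
      have hEj := hE j le_rfl
      rw [l2] at hZ1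
      rw [l3] at hY1
      rw [l1] at hcj hEj
      have step : ∃ y ∈ W n (q + 1), Z (j + 1) = dd n (j + 1) (Y (j + 1)) + rr (j + 1) (q + 1) y := by
        by_cases he : Even j
        · have he1 : ¬ Even (j + 1) := by simpa [Nat.even_add_one] using he
          have he2 : Even (j + 1 + 1) := by simpa [Nat.even_add_one] using he
          simp only [dd, rr, if_pos he, if_neg he1, if_pos he2, LinearMap.sub_apply,
            LinearMap.id_apply, LinearMap.neg_apply] at hcj hEj ⊢
          rw [hEj, map_add, b_b, zero_add, b_one_sub_t (W_le_Ln _ _ hY1)] at hcj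
          have hx : (Z (j + 1) + bp n (Y (j + 1))) - t (Z (j + 1) + bp n (Y (j + 1))) = 0 := by
            rw [← hcj, map_add]; abel
          obtain ⟨y, hy, h⟩ := ker_one_sub_t_gen (q := q) (Submodule.add_mem _ hZ1 (bp_memW hY1)) hx
          exact ⟨y, hy, by rw [← h]; abel⟩
        · have he1 : Even (j + 1) := by simpa [Nat.even_add_one] using he
          have he2 : ¬ Even (j + 1 + 1) := by simpa [Nat.even_add_one] using he
          simp only [dd, rr, if_neg he, if_pos he1, if_neg he2, LinearMap.sub_apply,
            LinearMap.id_apply, LinearMap.neg_apply] at hcj hEj ⊢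
          rw [hEj, map_add, map_neg, bp_bp, neg_zero, zero_add, bp_Nm (W_le_Ln _ _ hY1)] at hcj
          have hx : Nm (q + 1) (Z (j + 1) - b n (Y (j + 1))) = 0 := by
            rw [← hcj, map_sub]; abel
          obtain ⟨y, hy, h⟩ := ker_Nm_gen (U := W n (q + 1)) (fun _ => t_memW)
            (Submodule.sub_mem _ hZ1 (b_memW hY1)) hx
          exact ⟨y, hy, by rw [← h]; abel⟩
      obtain ⟨y, hy, hs⟩ := step
      refine ⟨Function.update Y (j + 2) y, ?_, ?_⟩
      · intro p hp
        by_cases hp2 : p = j + 2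
        · subst hp2
          have : T + 1 - (j + 2) = q := by omega
          simpa [this] using hy
        · rw [Function.update_of_ne hp2]
          exact hY p (by omega)
      · intro p hp
        rw [Function.update_of_ne (by omega : p ≠ j + 2)]
        by_cases hp2 : p = j + 1
        · subst hp2
          rw [l2, Function.update_self]; exact hs
        · rw [Function.update_of_ne (by omega : p + 1 ≠ j + 2)]
          exact hE p (by omega)
  exact main T le_rfl

end TC

namespace TC

/-! ### transfer -/

def wf {n q : ℕ} (a : Fin q → Fin n) : List ℕ := List.ofFn fun i => (a i : ℕ) + 1

def E (n q : ℕ) : Ch n q →ₗ[ℚ] M :=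
  Finsupp.linearCombination ℚ fun a : Fin (q + 1) → Fin n => wd (wf a)

/-- basis vectors of the chain space -/
def bv {n q : ℕ} (a : Fin (q + 1) → Fin n) : Ch n q := Finsupp.single a (1 : ℚ)

lemma E_bv {n q : ℕ} (a : Fin (q + 1) → Fin n) : E n q (bv a) = wd (wf a) :=
  (Finsupp.linearCombination_single ℚ _ _).trans (one_smul _ _)

lemma ch_ext {n q : ℕ} {N : Type*} [AddCommGroup N] [Module ℚ N] {f g : Ch n q →ₗ[ℚ] N}
    (h : ∀ a, f (bv a) = g (bv a)) (x : Ch n q) : f x = g x := by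
  have : f = g := by
    refine Finsupp.lhom_ext' (M := ℚ) (R := ℚ) fun a => LinearMap.ext_ring ?_
    exact h a
  rw [this]

lemma wf_inj {n q : ℕ} : Function.Injective (wf : (Fin q → Fin n) → List ℕ) := by
  intro a c h
  have := List.ofFn_injective h
  funext i
  have h2 := congrFun this i
  simp at h2
  exact Fin.ext (by omega)

lemma wf_length {n q : ℕ} (a : Fin q → Fin n) : (wf a).length = q := by
  simp only [wf, List.length_ofFn]

lemma wf_get {n q : ℕ} (a : Fin q → Fin n) (i : ℕ) (h : i < (wf a).length) :
    (wf a)[i] = (a ⟨i, by rwa [wf_length] at h⟩ : ℕ) + 1 := by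
  simp only [wf, List.getElem_ofFn]

lemma E_inj (n q : ℕ) : Function.Injective (E n q) := by
  have h : ∀ x : Ch n q, E n q x = Finsupp.mapDomain wf x := by
    intro x
    refine ch_ext (g := Finsupp.lmapDomain ℚ ℚ wf) (fun a => ?_) x
    rw [E_bv]
    exact (Finsupp.mapDomain_single).symm
  intro x y hxy
  rw [h, h] at hxy
  exact Finsupp.mapDomain_injective wf_inj hxy

lemma wf_mem {n q : ℕ} (a : Fin q → Fin n) : wf a ∈ GW n q := by
  refine ⟨by simp [wf], ?_⟩
  intro c hc
  simp only [wf, List.mem_ofFn] at hc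
  obtain ⟨i, rfl⟩ := hc
  have := (a i).isLt
  omega

lemma E_mem {n q : ℕ} (x : Ch n q) : E n q x ∈ W n (q + 1) := by
  have := ch_ext (f := (W n (q + 1)).mkQ ∘ₗ E n q) (g := 0) (fun a => ?_) x
  · simpa using this
  · simp only [LinearMap.comp_apply, E_bv, LinearMap.zero_apply, Submodule.mkQ_apply,
      Submodule.Quotient.mk_eq_zero]
    exact wd_mem (wf_mem a)

lemma E_surj {n q : ℕ} {x : M} (hx : x ∈ W n (q + 1)) : ∃ c : Ch n q, E n q c = x := by
  have := sp_map (U := LinearMap.range (E n q)) LinearMap.id (fun l hl => ?_) hx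
  · exact this
  · obtain ⟨h1, h2⟩ := hl
    refine ⟨bv fun i => ⟨l[(i : ℕ)]'(by have := i.isLt; omega) - 1, ?_⟩, ?_⟩
    · have := h2 (l[(i : ℕ)]'(by have := i.isLt; omega)) (List.getElem_mem _)
      omega
    · rw [E_bv, LinearMap.id_apply]
      congr 1
      refine List.ext_getElem (by simp [wf, h1]) fun i hi hi' => ?_
      have := h2 (l[i]) (List.getElem_mem _)
      rw [wf_get]
      simp only
      omega

lemma E_ccast {n q q' : ℕ} (h : q = q') (x : Ch n q) : E n q' (ccast h x) = E n q x := by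
  subst h; rfl

lemma dw_app (n : ℕ) (s r : List ℕ) (m c : ℕ) : dw n s.length (s ++ m :: c :: r) =
    ((-1 : ℚ) ^ s.length) • if m + c ≤ n then wd (s ++ (m + c) :: r) else 0 := by
  induction s with
  | nil => simp [dw, tr]
  | cons a s ih =>
    simp only [List.length_cons, List.cons_append, dw, ih]
    split_ifs <;> simp [pow_succ]

lemma merge_pos {n q : ℕ} (a : Fin (q + 2) → Fin n) (i : Fin (q + 1))
    (h : (a i.castSucc : ℕ) + (a i.succ : ℕ) + 1 < n) : merge a i = bv
      (fun j : Fin (q + 1) =>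
        if (j : ℕ) < (i : ℕ) then a j.castSucc
        else if (j : ℕ) = (i : ℕ) then ⟨(a i.castSucc : ℕ) + (a i.succ : ℕ) + 1, h⟩
        else a j.succ) := by
  exact dif_pos h

lemma merge_neg {n q : ℕ} (a : Fin (q + 2) → Fin n) (i : Fin (q + 1))
    (h : ¬ (a i.castSucc : ℕ) + (a i.succ : ℕ) + 1 < n) : merge a i = 0 := by
  exact dif_neg h

lemma mergeLast_pos {n q : ℕ} (a : Fin (q + 2) → Fin n)
    (h : (a (Fin.last (q + 1)) : ℕ) + (a 0 : ℕ) + 1 < n) : mergeLast a = bv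
      (fun j : Fin (q + 1) =>
        if (j : ℕ) = 0 then ⟨(a (Fin.last (q + 1)) : ℕ) + (a 0 : ℕ) + 1, h⟩
        else a j.castSucc) := by
  exact dif_pos h

lemma mergeLast_neg {n q : ℕ} (a : Fin (q + 2) → Fin n)
    (h : ¬ (a (Fin.last (q + 1)) : ℕ) + (a 0 : ℕ) + 1 < n) : mergeLast a = 0 := by
  exact dif_neg h

lemma E_merge {n q : ℕ} (a : Fin (q + 2) → Fin n) (i : Fin (q + 1)) :
    ((-1 : ℚ) ^ (i : ℕ)) • E n q (merge a i) = dw n i (wf a) := by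
  have hi := i.isLt
  have hlen : (wf a).length = q + 2 := by simp [wf]
  have h1 : wf a = (wf a).take i ++ ((a i.castSucc : ℕ) + 1) :: ((a i.succ : ℕ) + 1) ::
      (wf a).drop (i + 2) := by
    have e1 : (wf a)[(i : ℕ)]'(by omega) = (a i.castSucc : ℕ) + 1 := wf_get _ _ _
    have e2 : (wf a)[(i : ℕ) + 1]'(by omega) = (a i.succ : ℕ) + 1 := wf_get _ _ _
    rw [← e1, ← e2, ← List.drop_eq_getElem_cons, ← List.drop_eq_getElem_cons,
      List.take_append_drop]
  have hl : ((wf a).take i).length = i := by rw [List.length_take]; omega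
  have h2 := dw_app n ((wf a).take i) ((wf a).drop (i + 2)) ((a i.castSucc : ℕ) + 1)
    ((a i.succ : ℕ) + 1)
  rw [← h1, hl] at h2
  rw [h2]
  congr 1
  by_cases h3 : (a i.castSucc : ℕ) + (a i.succ : ℕ) + 1 < n
  · rw [merge_pos a i h3, E_bv, if_pos (by omega)]
    congr 1
    refine List.ext_getElem ?_ fun j hj hj' => ?_
    · rw [wf_length, List.length_append, hl, List.length_cons, List.length_drop, hlen]; omega
    · have hjq : j < q + 1 := by rwa [wf_length] at hj
      rw [wf_get, List.getElem_append]
      by_cases c1 : j < i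
      · rw [dif_pos (by rwa [hl])]
        simp only [if_pos c1]
        rw [List.getElem_take, wf_get]
        rfl
      · rw [dif_neg (by rwa [hl])]
        simp only [if_neg c1, hl]
        by_cases c2 : j = i
        · subst c2
          simp
          omega
        · simp only [if_neg c2]
          obtain ⟨d, hd⟩ : ∃ d, j - i = d + 1 := ⟨j - i - 1, by omega⟩
          simp only [hd, List.getElem_cons_succ, List.getElem_drop, wf_get]
          have : (⟨j, hjq⟩ : Fin (q + 1)).succ = ⟨i + 2 + d, by omega⟩ := by
            ext; simp; omega
          rw [this]
  · rw [merge_neg a i h3, if_neg (by omega), map_zero]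

lemma wf_zero {n q : ℕ} (a : Fin (q + 1) → Fin n) :
    wf a = ((a 0 : ℕ) + 1) :: wf (fun i => a i.succ) := by
  simp [wf, List.ofFn_succ]

lemma wf_last {n q : ℕ} (a : Fin (q + 1) → Fin n) :
    wf a = wf (fun i => a i.castSucc) ++ [(a (Fin.last q) : ℕ) + 1] := by
  rw [wf, List.ofFn_succ_last]
  rfl

lemma tw_wf {n q : ℕ} (a : Fin (q + 1) → Fin n) :
    tw (wf a) = ((-1 : ℚ) ^ q) • wd (((a (Fin.last q) : ℕ) + 1) :: wf (fun i => a i.castSucc)) := by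
  rw [wf_last, tw_concat]
  simp [wf]

lemma E_mergeLast {n q : ℕ} (a : Fin (q + 2) → Fin n) :
    ((-1 : ℚ) ^ (q + 1)) • E n q (mergeLast a) = D n 0 (tw (wf a)) := by
  rw [tw_wf, map_smul, wf_zero, D_wd, dw, tr]
  congr 1
  have e0 : a (Fin.castSucc 0) = a 0 := rfl
  by_cases h3 : (a (Fin.last (q + 1)) : ℕ) + (a 0 : ℕ) + 1 < n
  · rw [mergeLast_pos a h3, E_bv, if_pos (by rw [e0]; omega), wf_zero]
    congr 2
    simp only [e0, Fin.val_zero, if_true]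
    omega
  · rw [mergeLast_neg a h3, if_neg (by rw [e0]; omega), map_zero]

lemma E_bbar {n q : ℕ} (x : Ch n (q + 1)) : E n q (bbar n q x) = bp n (E n (q + 1) x) := by
  refine ch_ext (f := E n q ∘ₗ bbar n q) (g := bp n ∘ₗ E n (q + 1)) (fun a => ?_) x
  have h1 : bbar n q (bv a) = ∑ i : Fin (q + 1), ((-1 : ℚ) ^ (i : ℕ)) • merge a i :=
    (Finsupp.linearCombination_single ℚ _ _).trans (one_smul _ _)
  have hlen : (wf a).length = q + 2 := by simp [wf]
  simp only [LinearMap.comp_apply]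
  rw [h1, E_bv, bp_wd, bpw_eq_sum, hlen, map_sum, Finset.sum_range]
  exact Finset.sum_congr rfl fun i _ => by rw [map_smul, E_merge]

lemma E_bH {n q : ℕ} (x : Ch n (q + 1)) : E n q (bH n q x) = b n (E n (q + 1) x) := by
  refine ch_ext (f := E n q ∘ₗ bH n q) (g := b n ∘ₗ E n (q + 1)) (fun a => ?_) x
  have h1 : bH n q (bv a) = bbar n q (bv a) + ((-1 : ℚ) ^ (q + 1)) • mergeLast a := by
    have h2 : bbar n q (bv a) = ∑ i : Fin (q + 1), ((-1 : ℚ) ^ (i : ℕ)) • merge a i :=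
      (Finsupp.linearCombination_single ℚ _ _).trans (one_smul _ _)
    rw [h2]
    exact (Finsupp.linearCombination_single ℚ _ _).trans (one_smul _ _)
  simp only [LinearMap.comp_apply]
  rw [h1, map_add, E_bbar, map_smul, E_mergeLast, b_apply, E_bv, t_wd]

lemma E_tOp {n q : ℕ} (x : Ch n q) : E n q (tOp n q x) = t (E n q x) := by
  refine ch_ext (f := E n q ∘ₗ tOp n q) (g := t ∘ₗ E n q) (fun a => ?_) x
  have h1 : tOp n q (bv a) = ((-1 : ℚ) ^ q) • bv (fun j : Fin (q + 1) => a (j - 1)) :=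
    (Finsupp.linearCombination_single ℚ _ _).trans (one_smul _ _)
  simp only [LinearMap.comp_apply]
  rw [h1, map_smul, E_bv, E_bv, t_wd, tw_wf, wf_zero]
  have e1 : (0 : Fin (q + 1)) - 1 = Fin.last q := by
    rw [sub_eq_iff_eq_add, Fin.last_add_one]
  have e2 : ∀ i : Fin q, i.succ - 1 = i.castSucc := by
    intro i
    rw [sub_eq_iff_eq_add, Fin.coeSucc_eq_succ]
  simp only [e1, e2]

lemma E_nOp {n q : ℕ} (x : Ch n q) : E n q (nOp n q x) = Nm (q + 1) (E n q x) := by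
  rw [Nm_apply, nOp, LinearMap.sum_apply, map_sum]
  refine Finset.sum_congr rfl fun i hi => ?_
  clear hi
  induction i with
  | zero => simp
  | succ i ih => rw [pow_succ', pow_succ', Module.End.mul_apply, Module.End.mul_apply, E_tOp, ih]

def ZZ {n m : ℕ} (z : TotT n m) (p : ℕ) : M := if h : p < m + 1 then E n (m - p) (z ⟨p, h⟩) else 0

lemma E_DT {n m : ℕ} (z : TotT n (m + 1)) (p : Fin (m + 1)) :
    E n (m - p) (DT n m z p) = dd n p (ZZ z p) + rr p (m - p + 1) (ZZ z (p + 1)) := by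
  have hp := p.isLt
  have h1 : E n (m - p + 1) (ccast (show m + 1 - (p : ℕ) = (m - (p : ℕ)) + 1 by omega)
      (z ⟨p, by omega⟩)) = ZZ z p := by
    rw [E_ccast, ZZ, dif_pos]
  have h2 : E n (m - p) (ccast (show m + 1 - ((p : ℕ) + 1) = m - (p : ℕ) by omega)
      (z ⟨p + 1, by omega⟩)) = ZZ z (p + 1) := by
    rw [E_ccast, ZZ, dif_pos]
  rw [← h1, ← h2]
  have h3 : DT n m z p =
      (if Even (p : ℕ) then bH n (m - (p : ℕ)) else -(bbar n (m - (p : ℕ))))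
        (ccast (show m + 1 - (p : ℕ) = (m - (p : ℕ)) + 1 by omega) (z ⟨p, by omega⟩)) +
      (if Even ((p : ℕ) + 1) then nOp n (m - (p : ℕ)) else LinearMap.id - tOp n (m - (p : ℕ)))
        (ccast (show m + 1 - ((p : ℕ) + 1) = m - (p : ℕ) by omega) (z ⟨p + 1, by omega⟩)) := rfl
  rw [h3, map_add]
  congr 1
  · unfold dd
    split_ifs
    · exact E_bH _
    · rw [LinearMap.neg_apply, LinearMap.neg_apply, map_neg, E_bbar]
  · unfold rr
    split_ifs
    · exact E_nOp _
    · rw [LinearMap.sub_apply, LinearMap.sub_apply, map_sub, LinearMap.id_apply,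
        LinearMap.id_apply, E_tOp]

lemma exact_odd (n m : ℕ) (z : TotT n (2 * m + 1)) (hz : DT n (2 * m) z = 0) :
    ∃ y, DT n (2 * m + 1) y = z := by
  have hZ : ∀ p ≤ 2 * m + 1, ZZ z p ∈ W n (2 * m + 1 - p + 1) := by
    intro p hp
    rw [ZZ, dif_pos (by omega)]
    exact E_mem _
  have hc : ∀ p < 2 * m + 1, dd n p (ZZ z p) + rr p (2 * m + 1 - p) (ZZ z (p + 1)) = 0 := by
    intro p hp
    have h1 := E_DT z ⟨p, hp⟩
    have e : 2 * m + 1 - p = 2 * m - p + 1 := by omega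
    rw [e]
    rw [← h1, hz]
    exact map_zero _
  have h0 : ∃ y ∈ W n (2 * m + 1 + 2), ∃ y' ∈ W n (2 * m + 1 + 1),
      ZZ z 0 = b n y + (y' - t y') := by
    have h1 := hc 0 (by omega)
    simp [dd, rr] at h1
    refine Q_W n m (ZZ z 0) (- ZZ z 1) (hZ 0 (by omega)) (Submodule.neg_mem _ (hZ 1 (by omega))) ?_
    rw [map_neg, eq_neg_of_add_eq_zero_left h1]
    abel
  obtain ⟨Y, hY, hE⟩ := rows (ZZ z) hZ hc h0
  have hex : ∀ p : Fin (2 * m + 1 + 1 + 1), ∃ c : Ch n (2 * m + 1 + 1 - p),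
      E n (2 * m + 1 + 1 - p) c = Y p := fun p => E_surj (hY p (by have := p.isLt; omega))
  obtain ⟨y, hy⟩ : ∃ y : TotT n (2 * m + 1 + 1), ∀ p : Fin (2 * m + 1 + 1 + 1),
      E n (2 * m + 1 + 1 - p) (y p) = Y p := by
    choose y hy using hex
    exact ⟨y, hy⟩
  have hYZ : ∀ p ≤ 2 * m + 2, ZZ y p = Y p := by
    intro p hp
    rw [ZZ, dif_pos (by omega)]
    exact hy ⟨p, by omega⟩
  refine ⟨y, ?_⟩
  funext p
  have hp := p.isLt
  apply E_inj
  rw [E_DT, hYZ p (by omega), hYZ (p + 1) (by omega), ← hE p (by omega), ZZ, dif_pos]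

end TC

theorem reduced_cyclic_homology_truncated_polynomial_even
    (n : ℕ) : ∀ m : ℕ, Subsingleton (HCodd n m) := by
  intro m
  unfold HCodd hmlgy
  rw [Submodule.Quotient.subsingleton_iff, eq_top_iff]
  rintro ⟨z, hz⟩ _
  obtain ⟨y, hy⟩ := TC.exact_odd n m z (LinearMap.mem_ker.mp hz)
  exact ⟨y, hy⟩

end
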